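/- If the pair (ν,β) is obtained from the pair (λ,α) by a sequence of admissible reflections, then there is an isomorphism of varieties N(ν,β) ≅ N(λ,α). -/

import Mathlib

open scoped BigOperators

noncomputable section

/-- A quiver with a finite vertex set `I` and a finite arrow set `A`;
`h a` and `t a` are the head and the tail of the arrow `a`. -/
structure FinQuiver where
  I : Type
  [fintypeI : Fintype I]
  [decEqI : DecidableEq I]
  A : Type
  [fintypeA : Fintype A]
  h : A → I
  t : A → I

attribute [instance] FinQuiver.fintypeI FinQuiver.decEqI FinQuiver.fintypeA

namespace FinQuiver

variable (Q : FinQuiver)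

/-- Arrows of the double quiver `Q̄` : every arrow `a : i → j` of `Q` (as `Sum.inl a`)
together with a reverse arrow `a* : j → i` (as `Sum.inr a`). -/
@[reducible] def DA : Type := Q.A ⊕ Q.A

instance : Fintype Q.DA := inferInstanceAs (Fintype (Q.A ⊕ Q.A))

/-- Head of an arrow of the double quiver. -/
@[reducible] def dh : Q.DA → Q.I := fun a => match a with
  | Sum.inl a => Q.h a
  | Sum.inr a => Q.t a

/-- Tail of an arrow of the double quiver. -/
@[reducible] def dt : Q.DA → Q.I := fun a => match a with
  | Sum.inl a => Q.t a
  | Sum.inr a => Q.h a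

/-- The symmetric bilinear form
`(α,β) = ∑_{i∈I} 2 α_i β_i − ∑_{a∈Q̄} α_{h(a)} β_{t(a)}` on `ℤ^I`. -/
def bil (α β : Q.I → ℤ) : ℤ :=
  (∑ i, 2 * α i * β i) - ∑ a : Q.DA, α (Q.dh a) * β (Q.dt a)

/-- `p(α) = 1 − q(α) = 1 − α·α + ∑_{a ∈ Q} α_{t(a)} α_{h(a)}`. -/
def pp (α : Q.I → ℤ) : ℤ :=
  1 - (∑ i, α i * α i) + ∑ a : Q.A, α (Q.t a) * α (Q.h a)

/-- The coordinate vector `ε_i` at a vertex `i`. -/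
def ev (i : Q.I) : Q.I → ℤ := fun j => if j = i then 1 else 0

/-- The coordinate vector of a vertex, as a vector of natural numbers. -/
def evN (i : Q.I) : Q.I → ℕ := fun j => if j = i then 1 else 0

/-- A vertex is loopfree if no arrow has both its head and its tail there. -/
def Loopfree (i : Q.I) : Prop := ∀ a : Q.A, ¬ (Q.h a = i ∧ Q.t a = i)

/-- The reflection `s_i(α) = α − (α,ε_i) ε_i` at a (loopfree) vertex `i`. -/
def refl (i : Q.I) (α : Q.I → ℤ) : Q.I → ℤ := α - Q.bil α (Q.ev i) • Q.ev i

/-- Two vertices are joined by some arrow. -/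
def Adj (i j : Q.I) : Prop :=
  ∃ a : Q.A, (Q.h a = i ∧ Q.t a = j) ∨ (Q.h a = j ∧ Q.t a = i)

/-- The quiver is connected. -/
def Connected : Prop := ∀ i j : Q.I, Relation.ReflTransGen Q.Adj i j

/-- The support of the vector `α` is connected in `Q`. -/
def SuppConnected (α : Q.I → ℤ) : Prop :=
  ∀ i j : Q.I, α i ≠ 0 → α j ≠ 0 →
    Relation.ReflTransGen (fun x y => α x ≠ 0 ∧ α y ≠ 0 ∧ Q.Adj x y) i j

/-- The fundamental region: nonzero nonnegative vectors with connected support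
such that `(α, ε_i) ≤ 0` for every vertex `i`. -/
def InFund (α : Q.I → ℤ) : Prop :=
  α ≠ 0 ∧ (∀ i, 0 ≤ α i) ∧ Q.SuppConnected α ∧ ∀ i, Q.bil α (Q.ev i) ≤ 0

/-- The roots of the Kac root system attached to `Q` : the real roots form the orbit
of the simple roots (coordinate vectors at loopfree vertices) under the reflections at
loopfree vertices, and the imaginary roots form the orbit of `±(fundamental region)`
under these reflections. -/
inductive IsRoot : (Q.I → ℤ) → Prop
  | simple (i : Q.I) (hi : Q.Loopfree i) : IsRoot (Q.ev i)
  | fund (α : Q.I → ℤ) (hα : Q.InFund α) : IsRoot α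
  | neg_fund (α : Q.I → ℤ) (hα : Q.InFund α) : IsRoot (-α)
  | reflect (i : Q.I) (hi : Q.Loopfree i) (α : Q.I → ℤ) (hα : IsRoot α) :
      IsRoot (Q.refl i α)

/-- Positive roots: roots all of whose components are nonnegative. -/
def IsPosRoot (α : Q.I → ℤ) : Prop := Q.IsRoot α ∧ (∀ i, 0 ≤ α i) ∧ α ≠ 0

/-- The Tits form is positive semidefinite. -/
def PosSemidef : Prop := ∀ α : Q.I → ℤ, 0 ≤ Q.bil α α

/-- The Tits form is positive definite. -/
def PosDef : Prop := Q.PosSemidef ∧ ∀ α : Q.I → ℤ, Q.bil α α = 0 → α = 0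

/-- Dynkin quivers: connected, with positive definite Tits form. -/
def IsDynkin : Prop := Q.Connected ∧ Q.PosDef

/-- Extended Dynkin quivers: connected, with positive semidefinite but not
positive definite Tits form. -/
def IsExtDynkin : Prop := Q.Connected ∧ Q.PosSemidef ∧ ¬ Q.PosDef

/-- `δ` is the minimal positive imaginary root of an extended Dynkin quiver:
the minimal nonzero nonnegative vector in the radical of the Tits form. -/
def IsMinImag (δ : Q.I → ℤ) : Prop :=
  (∀ i, 0 ≤ δ i) ∧ δ ≠ 0 ∧ (∀ i, Q.bil δ (Q.ev i) = 0) ∧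
    ∀ β : Q.I → ℤ, (∀ i, 0 ≤ β i) → β ≠ 0 → (∀ i, Q.bil β (Q.ev i) = 0) →
      ∀ i, δ i ≤ β i

/-- The subquiver of `Q` on a subset `S` of vertices and a subset `B` of arrows. -/
def restrict (S : Set Q.I) (B : Set Q.A) (hh : ∀ a ∈ B, Q.h a ∈ S)
    (ht : ∀ a ∈ B, Q.t a ∈ S) : FinQuiver :=
  { I := S
    fintypeI := Fintype.ofFinite S
    decEqI := Classical.decEq _
    A := B
    fintypeA := Fintype.ofFinite B
    h := fun a => ⟨Q.h a.1, hh a.1 a.2⟩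
    t := fun a => ⟨Q.t a.1, ht a.1 a.2⟩ }

/-- The support quiver of a vector: the full subquiver on the support of `β`. -/
def suppQuiver (β : Q.I → ℤ) : FinQuiver :=
  Q.restrict {i | β i ≠ 0} {a | β (Q.h a) ≠ 0 ∧ β (Q.t a) ≠ 0}
    (fun _ ha => ha.1) (fun _ ha => ha.2)

/-- A dimension vector (of natural numbers), viewed in `ℤ^I`. -/
def toZ (α : Q.I → ℕ) : Q.I → ℤ := fun i => (α i : ℤ)

/-- An oriented cycle in the double quiver `Q̄`, consisting of `n+1` arrows,
the tail of each arrow being the head of the (cyclically) next one. -/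
structure Cyc (Q' : FinQuiver) where
  n : ℕ
  ar : Fin (n + 1) → Q'.DA
  compat : ∀ i : Fin (n + 1), Q'.dt (ar i) = Q'.dh (ar (i + 1))

section WithField

variable (K : Type) [Field K]

/-- `λ·α = ∑_i λ_i α_i`. -/
def pair (l : Q.I → K) (α : Q.I → ℤ) : K := ∑ i, l i * (α i : K)

/-- `R_λ^+`, the set of positive roots `α` with `λ·α = 0`. -/
def Rplus (l : Q.I → K) : Set (Q.I → ℤ) :=
  {α | Q.IsPosRoot α ∧ Q.pair K l α = 0}

/-- `ℕ R_λ^+`, the set of sums (including the empty sum `0`) of elements of `R_λ^+`. -/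
def NRplus (l : Q.I → K) : Set (Q.I → ℤ) :=
  (AddSubmonoid.closure (Q.Rplus K l) : AddSubmonoid (Q.I → ℤ))

/-- `Σ_λ` : the elements `α ∈ R_λ^+` with `p(α) > ∑ p(β⁽ᵗ⁾)` for every decomposition
of `α` as a sum of at least two elements `β⁽ᵗ⁾` of `R_λ^+`. -/
def SigmaSet (l : Q.I → K) : Set (Q.I → ℤ) :=
  {α | α ∈ Q.Rplus K l ∧
    ∀ (n : ℕ) (β : Fin n → (Q.I → ℤ)), 2 ≤ n → (∀ j, β j ∈ Q.Rplus K l) →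
      α = ∑ j, β j → (∑ j, Q.pp (β j)) < Q.pp α}

/-- The dual reflection `r_i(λ)_j = λ_j − (ε_i,ε_j) λ_i`. -/
def coRefl (i : Q.I) (l : Q.I → K) : Q.I → K :=
  fun j => l j - (Q.bil (Q.ev i) (Q.ev j) : ℤ) * l i

/-- A single admissible reflection applied to the pair `(λ, α)`:
a reflection at a loopfree vertex `i` with `λ_i ≠ 0`. -/
def AdmStep (x y : (Q.I → K) × (Q.I → ℤ)) : Prop :=
  ∃ i : Q.I, Q.Loopfree i ∧ x.1 i ≠ 0 ∧ y.1 = Q.coRefl K i x.1 ∧ y.2 = Q.refl i x.2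

/-- `(ν,β)` is obtained from `(λ,α)` by a sequence of admissible reflections:
the two pairs lie in the same class of the equivalence relation generated by
admissible reflections. -/
def AdmEquiv (x y : (Q.I → K) × (Q.I → ℤ)) : Prop :=
  Relation.EqvGen (Q.AdmStep K) x y

/-- The space `Rep(Q̄,α)` of representations of the double quiver. -/
def Rep (α : Q.I → ℕ) : Type :=
  ∀ a : Q.DA, Matrix (Fin (α (Q.dh a))) (Fin (α (Q.dt a))) K

/-- The moment map
`μ_α(x)_i = ∑_{a∈Q, h(a)=i} x_a x_{a*} − ∑_{a∈Q, t(a)=i} x_{a*} x_a`. -/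
def moment (α : Q.I → ℕ) (x : Q.Rep K α) (i : Q.I) :
    Matrix (Fin (α i)) (Fin (α i)) K :=
  (∑ a : Q.A, if h : Q.h a = i then
      (x (Sum.inl a) * x (Sum.inr a)).submatrix
        (Fin.cast (congrArg α h).symm) (Fin.cast (congrArg α h).symm)
    else 0)
  - ∑ a : Q.A, if h : Q.t a = i then
      (x (Sum.inr a) * x (Sum.inl a)).submatrix
        (Fin.cast (congrArg α h).symm) (Fin.cast (congrArg α h).symm)
    else 0

/-- The fibre `μ_α^{-1}(λ)` of the moment map over (the central element
corresponding to) `λ`. -/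
def MomentFiber (l : Q.I → K) (α : Q.I → ℕ) : Set (Q.Rep K α) :=
  {x | ∀ i : Q.I, Q.moment K α x i = l i • (1 : Matrix (Fin (α i)) (Fin (α i)) K)}

/-- The group `∏_i GL(α_i,K)`; it acts on `Rep(Q̄,α)` by conjugation, with the same
orbits and the same invariant functions as `G(α) = (∏_i GL(α_i,K))/K^*`. -/
def Gl (α : Q.I → ℕ) : Type := ∀ i : Q.I, Matrix.GeneralLinearGroup (Fin (α i)) K

/-- The conjugation action of `∏_i GL(α_i,K)` on `Rep(Q̄,α)`. -/
def glAct (α : Q.I → ℕ) (g : Q.Gl K α) (x : Q.Rep K α) : Q.Rep K α :=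
  fun a => (g (Q.dh a) : Matrix (Fin (α (Q.dh a))) (Fin (α (Q.dh a))) K) * x a *
    (((g (Q.dt a))⁻¹ : Matrix.GeneralLinearGroup (Fin (α (Q.dt a))) K) :
      Matrix (Fin (α (Q.dt a))) (Fin (α (Q.dt a))) K)

/-- Coordinates on `Rep(Q̄,α)`: matrix entries. -/
def Coords (α : Q.I → ℕ) : Type :=
  Σ a : Q.DA, Fin (α (Q.dh a)) × Fin (α (Q.dt a))

/-- The coordinate ring `K[V]` of a subset `V` of `Rep(Q̄,α)` : the algebra of
`K`-valued functions on `V` which are restrictions of polynomial functions. -/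
def fnRing (α : Q.I → ℕ) (V : Set (Q.Rep K α)) : Subalgebra K (↥V → K) :=
  (MvPolynomial.aeval
    (fun c : Q.Coords α => fun v : ↥V => v.1 c.1 c.2.1 c.2.2) :
    MvPolynomial (Q.Coords α) K →ₐ[K] (↥V → K)).range

end WithField

end FinQuiver

/-- The subalgebra of functions invariant under a relation (e.g. the orbit
relation of a group action). -/
def relInv (K : Type) [Field K] {V : Type} (R : V → V → Prop) :
    Subalgebra K (V → K) where
  carrier := {f | ∀ x y : V, R x y → f x = f y}
  mul_mem' := by
    intro f g hf hg x y hxy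
    simp only [Pi.mul_apply, hf x y hxy, hg x y hxy]
  one_mem' := fun x y _ => rfl
  add_mem' := by
    intro f g hf hg x y hxy
    simp only [Pi.add_apply, hf x y hxy, hg x y hxy]
  zero_mem' := fun x y _ => rfl
  algebraMap_mem' := fun c x y _ => rfl

namespace FinQuiver

variable (Q : FinQuiver) (K : Type) [Field K]

/-- The coordinate ring of the Marsden–Weinstein reduction
`N(λ,α) = μ_α^{-1}(λ) ⫽ G(α)` : the `G(α)`-invariant functions in the coordinate
ring of `μ_α^{-1}(λ)`.  Two such reductions are isomorphic as (affine) varieties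
exactly when these `K`-algebras are isomorphic. -/
def InvRing (l : Q.I → K) (α : Q.I → ℕ) :
    Subalgebra K (↥(Q.MomentFiber K l α) → K) :=
  Q.fnRing K α (Q.MomentFiber K l α) ⊓
    relInv K (fun x y : ↥(Q.MomentFiber K l α) =>
      ∃ g : Q.Gl K α, y.1 = Q.glAct K α g x.1)

/-- Index type for a product `∏_t X_t^{m_t}`. -/
@[reducible] def SymIdx (s : ℕ) (m : Fin s → ℕ) : Type := Σ t : Fin s, Fin (m t)

/-- The product `∏_{t} Rep(Q̄, d_t)^{m_t}` of representation spaces. -/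
def SymRep (s : ℕ) (m : Fin s → ℕ) (d : Fin s → (Q.I → ℕ)) : Type :=
  ∀ p : SymIdx s m, Q.Rep K (d p.1)

/-- The product `∏_t μ_{d_t}^{-1}(λ)^{m_t}` of moment map fibres. -/
def SymFiber (s : ℕ) (m : Fin s → ℕ) (d : Fin s → (Q.I → ℕ)) (l : Q.I → K) :
    Set (Q.SymRep K s m d) :=
  {x | ∀ p : SymIdx s m, x p ∈ Q.MomentFiber K l (d p.1)}

/-- Polynomial functions on the product of fibres. -/
def symFnRing (s : ℕ) (m : Fin s → ℕ) (d : Fin s → (Q.I → ℕ)) (l : Q.I → K) :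
    Subalgebra K (↥(Q.SymFiber K s m d l) → K) :=
  (MvPolynomial.aeval
    (fun c : Σ p : SymIdx s m, Q.Coords (d p.1) =>
      fun v : ↥(Q.SymFiber K s m d l) => v.1 c.1 c.2.1 c.2.2.1 c.2.2.2) :
    MvPolynomial (Σ p : SymIdx s m, Q.Coords (d p.1)) K →ₐ[K]
      (↥(Q.SymFiber K s m d l) → K)).range

/-- The componentwise action of the product of the groups `∏ GL(d_t)^{m_t}`. -/
def symGlAct (s : ℕ) (m : Fin s → ℕ) (d : Fin s → (Q.I → ℕ))
    (g : ∀ p : SymIdx s m, Q.Gl K (d p.1)) (x : Q.SymRep K s m d) :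
    Q.SymRep K s m d :=
  fun p => Q.glAct K (d p.1) (g p) (x p)

/-- The action of `∏_t S_{m_t}` permuting the factors of each `X_t^{m_t}`. -/
def symPermAct (s : ℕ) (m : Fin s → ℕ) (d : Fin s → (Q.I → ℕ))
    (π : ∀ t : Fin s, Equiv.Perm (Fin (m t))) (x : Q.SymRep K s m d) :
    Q.SymRep K s m d :=
  fun p => x ⟨p.1, π p.1 p.2⟩

/-- The coordinate ring of the product of symmetric products
`∏_t S^{m_t} N(λ, d_t)` of Marsden–Weinstein reductions: functions on
`∏_t μ_{d_t}^{-1}(λ)^{m_t}` which are polynomial, invariant under all the groups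
`G(d_t)` acting on the separate factors, and symmetric under permutations of the
`m_t` factors of each type `t`. -/
def SymInvRing (s : ℕ) (m : Fin s → ℕ) (d : Fin s → (Q.I → ℕ)) (l : Q.I → K) :
    Subalgebra K (↥(Q.SymFiber K s m d l) → K) :=
  Q.symFnRing K s m d l ⊓
    relInv K (fun x y : ↥(Q.SymFiber K s m d l) =>
      ∃ g : ∀ p : SymIdx s m, Q.Gl K (d p.1), y.1 = Q.symGlAct K s m d g x.1) ⊓
    relInv K (fun x y : ↥(Q.SymFiber K s m d l) =>
      ∃ π : ∀ t : Fin s, Equiv.Perm (Fin (m t)), y.1 = Q.symPermAct K s m d π x.1)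

/-- The trace function `tr_p` of an oriented cycle `p` in `Q̄` :
`tr_p(x) = tr(x_{a_1} ⋯ x_{a_ℓ})`, written out via matrix entries. -/
def cycTr (α : Q.I → ℕ) (p : Q.Cyc) (x : Q.Rep K α) : K :=
  ∑ c : ∀ i : Fin (p.n + 1), Fin (α (Q.dh (p.ar i))),
    ∏ i : Fin (p.n + 1),
      x (p.ar i) (c i) (Fin.cast (congrArg α (p.compat i)).symm (c (i + 1)))

/-- `U` is a subrepresentation of the `Π^λ`-module given by the point
`x ∈ Rep(Q̄,α)` : a collection of subspaces stable under all the maps `x_a`. -/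
def SubRep (α : Q.I → ℕ) (x : Q.Rep K α)
    (U : ∀ i : Q.I, Submodule K (Fin (α i) → K)) : Prop :=
  ∀ a : Q.DA, ∀ v ∈ U (Q.dt a), (x a).mulVec v ∈ U (Q.dh a)

/-- The module given by `x` has the simple module `S_{i₀}` (dimension vector
`ε_{i₀}`, all arrows acting as zero) as a composition factor: it has a subquotient
of dimension vector `ε_{i₀}` on which all arrows act as zero. -/
def HasSFactor (α : Q.I → ℕ) (i0 : Q.I) (x : Q.Rep K α) : Prop :=
  ∃ U W : ∀ i : Q.I, Submodule K (Fin (α i) → K),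
    Q.SubRep K α x U ∧ Q.SubRep K α x W ∧ (∀ i, U i ≤ W i) ∧
    (∀ i, Module.finrank K (W i) =
      Module.finrank K (U i) + (if i = i0 then 1 else 0)) ∧
    (∀ a : Q.DA, Q.dh a = i0 → Q.dt a = i0 →
      ∀ v ∈ W (Q.dt a), (x a).mulVec v ∈ U (Q.dh a))

/-- `W/U` is a simple subquotient of the module given by `x`; the simple
subquotients of a module are, up to isomorphism, exactly its composition factors. -/
def SimpleSubquot (α : Q.I → ℕ) (x : Q.Rep K α)
    (U W : ∀ i : Q.I, Submodule K (Fin (α i) → K)) : Prop :=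
  Q.SubRep K α x U ∧ Q.SubRep K α x W ∧ (∀ i, U i ≤ W i) ∧ U ≠ W ∧
    ∀ V : ∀ i : Q.I, Submodule K (Fin (α i) → K),
      Q.SubRep K α x V → (∀ i, U i ≤ V i) → (∀ i, V i ≤ W i) → V = U ∨ V = W

/-- The direct sum map `∏_{j=1}^m Rep(Q̄,δ) → Rep(Q̄,mδ)` (block diagonal). -/
def dsMap (δ : Q.I → ℕ) (m : ℕ) (y : Fin m → Q.Rep K δ) :
    Q.Rep K (fun i => m * δ i) :=
  fun a => Matrix.of fun r c =>
    if (finProdFinEquiv.symm r).1 = (finProdFinEquiv.symm c).1 then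
      y (finProdFinEquiv.symm r).1 a (finProdFinEquiv.symm r).2
        (finProdFinEquiv.symm c).2
    else 0

end FinQuiver

/-!
At a loopfree vertex `i`, a point of `μ⁻¹(λ)` is a pair of maps `V_i → ⊕ V_{t(a)} → V_i`, the sum
over the arrows of the double quiver with head `i`, whose composite is `λ_i`. If `λ_i ≠ 0`, then
`V_i` is a direct summand, with a complement of dimension `s_i(α)_i`, and the reflected point has
this complement at `i`, with maps such that the endomorphism `M` of `⊕ V_{t(a)}` going through `i`
is replaced by `M - λ_i`. The points of the two fibres that agree away from `i` and whose `M` differ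
by `λ_i` therefore form a correspondence that is total on both sides and compatible with the base
changes.

Every invariant regular function is a polynomial in `M` and the arrows away from `i`, so it can be
carried along the correspondence. Indeed the principal minors of `M` of size `α_i` sum to
`λ_i ^ α_i`, and where such a minor does not vanish, its columns are a normal form for the action
of `GL(V_i)`: hence a power of the minor times the invariant is such a polynomial, and the powers
generate the unit ideal.

Vector spaces of varying dimension are encoded as the images of idempotent matrices `e j` of one
fixed size.
-/

namespace MarsdenWeinstein

section IdempotentMatrix

open Matrix

variable {K : Type*} [Field K] {m n o ι : Type*} [Fintype m] [Fintype n] [Fintype o] [Fintype ι]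

/-- The matrices `u` and `w` split the idempotent matrix `E`: they exhibit `ι → R` as its image,
with inclusion `u` and projection `w`. -/
structure IsSplitting {R : Type*} [Semiring R] [DecidableEq ι] (E : Matrix m m R)
    (u : Matrix m ι R) (w : Matrix ι m R) : Prop where
  mul_eq : u * w = E
  mul_eq_one : w * u = 1

namespace IsSplitting

variable {R : Type*} [Semiring R] [DecidableEq ι] {E : Matrix m m R} {u : Matrix m ι R}
  {w : Matrix ι m R}

theorem mul_left (h : IsSplitting E u w) : E * u = u := by
  rw [← h.mul_eq, Matrix.mul_assoc, h.mul_eq_one, Matrix.mul_one]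

theorem mul_right (h : IsSplitting E u w) : w * E = w := by
  rw [← h.mul_eq, ← Matrix.mul_assoc, h.mul_eq_one, Matrix.one_mul]

theorem rank_eq {E : Matrix m m K} {u : Matrix m ι K} {w : Matrix ι m K}
    (h : IsSplitting E u w) : E.rank = Fintype.card ι := by
  rw [← h.mul_eq]
  apply le_antisymm ((rank_mul_le_left u w).trans u.rank_le_card_width)
  calc Fintype.card ι = (w * (u * w) * u).rank := by
        rw [h.mul_eq, h.mul_right, h.mul_eq_one, rank_one]
    _ ≤ (u * w).rank := (rank_mul_le_left _ _).trans (rank_mul_le_right _ _)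

end IsSplitting

theorem exists_isSplitting [DecidableEq ι] {E : Matrix m m K} (hE : IsIdempotentElem E)
    (hι : Fintype.card ι = E.rank) : ∃ (u : Matrix m ι K) (w : Matrix ι m K),
      IsSplitting E u w := by
  classical
  have hL : LinearMap.IsProj E.toLin'.range E.toLin' :=
    LinearMap.IsIdempotentElem.isProj_range _ (hE.map toLinAlgEquiv')
  let φ : E.toLin'.range ≃ₗ[K] (ι → K) := LinearEquiv.ofFinrankEq _ _ <| by
    rw [Module.finrank_fintype_fun_eq_card, hι]; rfl
  let U := E.toLin'.range.subtype ∘ₗ φ.symm.toLinearMap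
  let W := φ.toLinearMap ∘ₗ hL.codRestrict
  refine ⟨LinearMap.toMatrix' U, LinearMap.toMatrix' W, ?_, ?_⟩
  · have hUW : U ∘ₗ W = E.toLin' := LinearMap.ext fun x => by simp [U, W]
    rw [← LinearMap.toMatrix'_comp, hUW, LinearMap.toMatrix'_toLin']
  · have hWU : W ∘ₗ U = LinearMap.id := LinearMap.ext fun x => by simp [U, W]
    rw [← LinearMap.toMatrix'_comp, hWU, LinearMap.toMatrix'_id]

theorem exists_isIdempotentElem_rank_eq (K : Type*) [Field K] {k : ℕ} (hk : k ≤ Fintype.card m) :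
    ∃ E : Matrix m m K, IsIdempotentElem E ∧ E.rank = k := by
  classical
  obtain ⟨s, -, hs⟩ := Finset.exists_subset_card_eq hk
  refine ⟨diagonal fun x => if x ∈ s then 1 else 0, ?_, ?_⟩
  · rw [IsIdempotentElem, diagonal_mul_diagonal]
    congr 1 with x
    split_ifs <;> simp
  · rw [rank_diagonal]
    simp [← hs]

theorem rank_mul_le_rank_mul_comm {p : Matrix m n K} {q : Matrix n m K}
    (h : IsIdempotentElem (p * q)) : (p * q).rank ≤ (q * p).rank := by
  rw [← h.eq, Matrix.mul_assoc, ← Matrix.mul_assoc q]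
  exact (rank_mul_le_right _ _).trans (rank_mul_le_left _ _)

theorem rank_add_of_isIdempotentElem {A B : Matrix m m K} (hA : IsIdempotentElem A)
    (hB : IsIdempotentElem B) (hAB : A * B = 0) (hBA : B * A = 0) :
    (A + B).rank = A.rank + B.rank := by
  obtain ⟨u, w, hA⟩ := exists_isSplitting hA (Fintype.card_fin _)
  obtain ⟨v, x, hB⟩ := exists_isSplitting hB (Fintype.card_fin _)
  have hwv : w * v = 0 := by
    rw [← hA.mul_right, ← hB.mul_left, Matrix.mul_assoc, ← Matrix.mul_assoc A, hAB,
      Matrix.zero_mul, Matrix.mul_zero]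
  have hxu : x * u = 0 := by
    rw [← hB.mul_right, ← hA.mul_left, Matrix.mul_assoc, ← Matrix.mul_assoc B, hBA,
      Matrix.zero_mul, Matrix.mul_zero]
  have hsum : IsSplitting (A + B) (fromCols u v) (fromRows w x) :=
    { mul_eq := by rw [fromCols_mul_fromRows, hA.mul_eq, hB.mul_eq]
      mul_eq_one := by
        rw [fromRows_mul_fromCols, hA.mul_eq_one, hwv, hxu, hB.mul_eq_one, fromBlocks_one] }
  rw [hsum.rank_eq, Fintype.card_sum, Fintype.card_fin, Fintype.card_fin]

theorem rank_sub_add_rank_of_isIdempotentElem {F A : Matrix m m K} (hF : IsIdempotentElem F)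
    (hA : IsIdempotentElem A) (hAF : A * F = A) (hFA : F * A = A) :
    (F - A).rank + A.rank = F.rank := by
  rw [← rank_add_of_isIdempotentElem (hA.sub hF hAF hFA) hA
    (by rw [Matrix.sub_mul, hFA, hA.eq, sub_self]) (by rw [Matrix.mul_sub, hAF, hA.eq, sub_self]),
    sub_add_cancel]

theorem isIdempotentElem_blockDiagonal' [DecidableEq o] {E : o → Matrix m m K}
    (hE : ∀ d, IsIdempotentElem (E d)) : IsIdempotentElem (blockDiagonal' E) := by
  rw [IsIdempotentElem, ← blockDiagonal'_mul]
  exact congrArg _ (funext hE)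

theorem rank_blockDiagonal'_of_isIdempotentElem [DecidableEq o] {E : o → Matrix m m K}
    (hE : ∀ d, IsIdempotentElem (E d)) : (blockDiagonal' E).rank = ∑ d, (E d).rank := by
  choose u w h using fun d => exists_isSplitting (hE d) (Fintype.card_fin (E d).rank)
  have hblock : IsSplitting (blockDiagonal' E) (blockDiagonal' u) (blockDiagonal' w) :=
    { mul_eq := by rw [← blockDiagonal'_mul, funext fun d => (h d).mul_eq]
      mul_eq_one := by
        rw [← blockDiagonal'_mul, funext fun d => (h d).mul_eq_one]
        exact blockDiagonal'_one }
  rw [hblock.rank_eq, Fintype.card_sigma]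
  simp only [Fintype.card_fin]

theorem exists_complementary_mul {E E' : Matrix m m K} {F : Matrix n n K} {P : Matrix m n K}
    {R : Matrix n m K} {c : K} (hc : c ≠ 0) (hE : IsIdempotentElem E)
    (hE' : IsIdempotentElem E') (hF : IsIdempotentElem F) (hPR : P * R = c • E)
    (hEP : E * P = P) (hPF : P * F = P) (hFR : F * R = R)
    (hrank : E'.rank + E.rank = F.rank) :
    ∃ (P' : Matrix m n K) (R' : Matrix n m K),
      P' * R' = (-c) • E' ∧ R' * P' = R * P - c • F ∧ E' * P' = P' ∧
      P' * F = P' ∧ F * R' = R' ∧ R' * E' = R' := by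
  -- `c⁻¹ R P` projects the image of `F` onto a copy of the image of `E`; the new pair comes from
  -- splitting the complementary projection through the image of `E'`.
  set A : Matrix n n K := c⁻¹ • R * P with hAdef
  have hPA : P * (c⁻¹ • R) = E := by rw [Matrix.mul_smul, hPR, inv_smul_smul₀ hc]
  have hA : IsIdempotentElem A := by
    rw [IsIdempotentElem, hAdef, Matrix.mul_assoc, ← Matrix.mul_assoc P, hPA, hEP]
  have hAF : A * F = A := by rw [hAdef, Matrix.mul_assoc, hPF]
  have hFA : F * A = A := by rw [hAdef, ← Matrix.mul_assoc, Matrix.mul_smul, hFR]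
  have hrankA : A.rank = E.rank := by
    rw [← hPA] at hE ⊢
    exact le_antisymm (rank_mul_le_rank_mul_comm hA) (rank_mul_le_rank_mul_comm hE)
  have hrankT : E'.rank = (F - A).rank := by
    have := rank_sub_add_rank_of_isIdempotentElem hF hA hAF hFA
    omega
  obtain ⟨v, x, hE'⟩ := exists_isSplitting hE' (Fintype.card_fin _)
  obtain ⟨u, w, hT⟩ := exists_isSplitting (hA.sub hF hAF hFA)
    ((Fintype.card_fin _).trans hrankT)
  have hFu : F * u = u := by
    rw [← hT.mul_left, ← Matrix.mul_assoc, Matrix.mul_sub, hF.eq, hFA]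
  have hwF : w * F = w := by
    rw [← hT.mul_right, Matrix.mul_assoc, Matrix.sub_mul, hF.eq, hAF]
  refine ⟨v * w, (-c) • (u * x), ?_, ?_, ?_, ?_, ?_, ?_⟩
  · rw [Matrix.mul_smul, Matrix.mul_assoc, ← Matrix.mul_assoc w, hT.mul_eq_one, Matrix.one_mul,
      hE'.mul_eq]
  · rw [Matrix.smul_mul, Matrix.mul_assoc, ← Matrix.mul_assoc x, hE'.mul_eq_one, Matrix.one_mul,
      hT.mul_eq, hAdef, Matrix.smul_mul, neg_smul, smul_sub, smul_inv_smul₀ hc, neg_sub]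
  · rw [← Matrix.mul_assoc, hE'.mul_left]
  · rw [Matrix.mul_assoc, hwF]
  · rw [Matrix.mul_smul, ← Matrix.mul_assoc, hFu]
  · rw [Matrix.smul_mul, Matrix.mul_assoc, hE'.mul_right]

end IdempotentMatrix

section Gauge

open Matrix

variable {R : Type*} [CommRing R] {m n ι : Type*} [Fintype m] [Fintype ι] [DecidableEq ι]

theorem sum_principal_minors_mul_comm [Fintype n] [DecidableEq m] [DecidableEq n]
    (A : Matrix m n R) (B : Matrix n m R) (k : ℕ) :
    ∑ s ∈ Finset.univ.powersetCard k,
        ((A * B).submatrix (Subtype.val : s → m) (Subtype.val : s → m)).det =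
      ∑ s ∈ Finset.univ.powersetCard k,
        ((B * A).submatrix (Subtype.val : s → n) (Subtype.val : s → n)).det := by
  have hdet : (1 + (Polynomial.X : Polynomial R) • (A * B).map Polynomial.C).det =
      (1 + (Polynomial.X : Polynomial R) • (B * A).map Polynomial.C).det := by
    rw [Matrix.map_mul, Matrix.map_mul, ← Matrix.smul_mul, det_one_add_mul_comm, Matrix.mul_smul]
  rw [← coeff_det_one_add_X_smul_eq_sum_minors, hdet, coeff_det_one_add_X_smul_eq_sum_minors]

theorem sum_principal_minors_card (A : Matrix ι ι R) :
    ∑ s ∈ Finset.univ.powersetCard (Fintype.card ι),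
      (A.submatrix (Subtype.val : s → ι) (Subtype.val : s → ι)).det = A.det := by
  rw [← Finset.card_univ, Finset.powersetCard_self, Finset.sum_singleton]
  exact det_submatrix_equiv_self (Equiv.subtypeUnivEquiv Finset.mem_univ) A

theorem IsSplitting.sum_principal_minors [Fintype n] [DecidableEq n] {E : Matrix m m R}
    {u : Matrix m ι R} {w : Matrix ι m R} (h : IsSplitting E u w) {X : Matrix m n R}
    {Y : Matrix n m R} {c : R} (hEX : E * X = X) (hXY : X * Y = c • E) :
    ∑ s ∈ Finset.univ.powersetCard (Fintype.card ι),
        ((Y * X).submatrix (Subtype.val : s → n) (Subtype.val : s → n)).det =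
      c ^ Fintype.card ι := by
  classical
  have hYX : Y * X = (Y * u) * (w * X) := by
    rw [Matrix.mul_assoc, ← Matrix.mul_assoc u, h.mul_eq, hEX]
  have hone : (w * X) * (Y * u) = c • (1 : Matrix ι ι R) := by
    rw [Matrix.mul_assoc, ← Matrix.mul_assoc X, hXY, Matrix.smul_mul, Matrix.mul_smul, h.mul_left,
      h.mul_eq_one]
  rw [hYX, sum_principal_minors_mul_comm, hone, sum_principal_minors_card, det_smul, det_one,
    mul_one]

theorem IsSplitting.mul_add_one_sub_mul [DecidableEq m] {E : Matrix m m R}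
    {u : Matrix m ι R} {w : Matrix ι m R} (h : IsSplitting E u w) {a b : Matrix ι ι R}
    (hab : a * b = 1) :
    (u * a * w + (1 - E)) * (u * b * w + (1 - E)) = 1 := by
  have hprod : u * a * w * (u * b * w) = E := by
    calc u * a * w * (u * b * w) = u * (a * ((w * u) * b)) * w := by simp only [Matrix.mul_assoc]
      _ = E := by rw [h.mul_eq_one, Matrix.one_mul, hab, Matrix.mul_one, h.mul_eq]
  have hleft : E * (u * b * w) = u * b * w := by simp only [← Matrix.mul_assoc, h.mul_left]
  have hright : u * a * w * E = u * a * w := by rw [Matrix.mul_assoc, h.mul_right]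
  have hE : E * E = E := by nth_rw 2 [← h.mul_eq]; rw [← Matrix.mul_assoc, h.mul_left, h.mul_eq]
  rw [Matrix.add_mul, Matrix.mul_add, hprod, Matrix.mul_sub, Matrix.mul_one, hright, sub_self,
    add_zero, Matrix.sub_mul, Matrix.one_mul, Matrix.mul_add, Matrix.mul_sub, hleft, hE,
    Matrix.mul_one]
  abel

theorem IsSplitting.compress_mul {E : Matrix m m R} {u : Matrix m ι R} {w : Matrix ι m R}
    (h : IsSplitting E u w) {g : Matrix m m R} (hg : Commute g E) : w * g * u * w = w * g := by
  rw [Matrix.mul_assoc, h.mul_eq, Matrix.mul_assoc, hg.eq, ← Matrix.mul_assoc, h.mul_right]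

theorem IsSplitting.mul_compress {E : Matrix m m R} {u : Matrix m ι R} {w : Matrix ι m R}
    (h : IsSplitting E u w) {g : Matrix m m R} (hg : Commute g E) : u * (w * g * u) = g * u := by
  rw [← Matrix.mul_assoc, ← Matrix.mul_assoc, h.mul_eq, ← hg.eq, Matrix.mul_assoc, h.mul_left]

theorem IsSplitting.compress_mul_compress [DecidableEq m] {E : Matrix m m R} {u : Matrix m ι R}
    {w : Matrix ι m R} (h : IsSplitting E u w) {g g' : Matrix m m R} (hg : Commute g E)
    (hgg' : g * g' = 1) : w * g * u * (w * g' * u) = 1 := by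
  rw [← Matrix.mul_assoc, ← Matrix.mul_assoc, h.compress_mul hg, Matrix.mul_assoc w, hgg',
    Matrix.mul_one, h.mul_eq_one]

/-- The invertible matrix by which an invertible matrix commuting with a split idempotent `E` acts
on the image of `E`. -/
def IsSplitting.compressUnit [DecidableEq m] {E : Matrix m m R} {u : Matrix m ι R}
    {w : Matrix ι m R} (h : IsSplitting E u w) (g : (Matrix m m R)ˣ) (hg : Commute g.1 E) :
    (Matrix ι ι R)ˣ where
  val := w * g.1 * u
  inv := w * g⁻¹.1 * u
  val_inv := h.compress_mul_compress hg g.mul_inv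
  inv_val := h.compress_mul_compress hg.units_inv_left g.inv_mul

/-- The invertible matrix acting as `a` on the image of a split idempotent `E` and as the identity
on its kernel. -/
def IsSplitting.cornerUnit [DecidableEq m] {E : Matrix m m R}
    {u : Matrix m ι R} {w : Matrix ι m R} (h : IsSplitting E u w) (a : (Matrix ι ι R)ˣ) :
    (Matrix m m R)ˣ where
  val := u * a.1 * w + (1 - E)
  inv := u * a⁻¹.1 * w + (1 - E)
  val_inv := h.mul_add_one_sub_mul a.mul_inv
  inv_val := h.mul_add_one_sub_mul a.inv_mul

namespace IsSplitting

variable [DecidableEq m] {E : Matrix m m R} {u : Matrix m ι R} {w : Matrix ι m R}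
  (h : IsSplitting E u w) (a : (Matrix ι ι R)ˣ)
include h

theorem inv_cornerUnit : (h.cornerUnit a)⁻¹ = h.cornerUnit a⁻¹ := rfl

theorem cornerUnit_mul_left : (h.cornerUnit a).1 * u = u * a.1 := by
  rw [cornerUnit, Matrix.add_mul, Matrix.sub_mul, Matrix.one_mul, h.mul_left, sub_self, add_zero,
    Matrix.mul_assoc, h.mul_eq_one, Matrix.mul_one]

theorem mul_cornerUnit : w * (h.cornerUnit a).1 = a.1 * w := by
  rw [cornerUnit, Matrix.mul_add, Matrix.mul_sub, Matrix.mul_one, h.mul_right, sub_self, add_zero,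
    ← Matrix.mul_assoc, ← Matrix.mul_assoc, h.mul_eq_one, Matrix.one_mul]

theorem commute_cornerUnit : Commute (h.cornerUnit a).1 E := by
  calc (h.cornerUnit a).1 * E = u * a.1 * w := by
        rw [← h.cornerUnit_mul_left, Matrix.mul_assoc, h.mul_eq]
    _ = E * (h.cornerUnit a).1 := by
        rw [Matrix.mul_assoc, ← h.mul_cornerUnit, ← Matrix.mul_assoc, h.mul_eq]

-- If a principal minor of `Y * X` is invertible, then so is the corresponding square block of
-- `w * X`; its inverse is the change of basis of the image of `E` that normalises that block.
theorem exists_gauge {X : Matrix m n R} {Y : Matrix n m R} (hEX : E * X = X) (hYE : Y * E = Y)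
    {σ : ι → n} (hσ : IsUnit ((Y * X).submatrix σ σ).det) :
    ∃ g : (Matrix m m R)ˣ, Commute g.1 E ∧
      ((Y * X).submatrix σ σ).det • (g.1 * X) =
        u * (((Y * X).submatrix σ σ).adjugate * (Y * X).submatrix σ id) ∧
      Y * (g⁻¹).1 = (Y * X).submatrix id σ * w := by
  set Z := (Y * X).submatrix σ σ
  have hX : u * (w * X) = X := by rw [← Matrix.mul_assoc, h.mul_eq, hEX]
  have hY : Y * u * w = Y := by rw [Matrix.mul_assoc, h.mul_eq, hYE]
  have hYX : Y * X = Y * u * (w * X) := by rw [Matrix.mul_assoc, hX]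
  have hrows : (Y * X).submatrix σ id = (Y * u).submatrix σ id * (w * X) := by
    rw [hYX]; exact submatrix_mul _ _ σ id id Function.bijective_id
  have hcols : (Y * X).submatrix id σ = Y * u * (w * X).submatrix id σ := by
    rw [hYX]; exact submatrix_mul _ _ id id σ Function.bijective_id
  have hZ : Z = (Y * u).submatrix σ id * (w * X).submatrix id σ :=
    (congrArg (fun A => A.submatrix id σ) hrows).trans
      (submatrix_mul _ _ id id σ Function.bijective_id)
  obtain ⟨a, ha⟩ : IsUnit ((w * X).submatrix id σ) := by
    rw [isUnit_iff_isUnit_det]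
    rw [hZ, det_mul] at hσ
    exact isUnit_of_mul_isUnit_right hσ
  have hadj : Z.adjugate * (Y * u).submatrix σ id = Z.det • a⁻¹.1 := by
    rw [← Units.mul_inv_cancel_right (Z.adjugate * _) a, Matrix.mul_assoc Z.adjugate, ha, ← hZ,
      adjugate_mul, Matrix.smul_mul, Matrix.one_mul]
  refine ⟨h.cornerUnit a⁻¹, h.commute_cornerUnit a⁻¹, ?_, ?_⟩
  · rw [hrows, ← Matrix.mul_assoc Z.adjugate, hadj, Matrix.smul_mul, Matrix.mul_smul,
      ← Matrix.mul_assoc, ← h.cornerUnit_mul_left, Matrix.mul_assoc, hX]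
  · rw [h.inv_cornerUnit, inv_inv, ← hY, Matrix.mul_assoc, h.mul_cornerUnit, hY, hcols, ha,
      Matrix.mul_assoc (Y * u), Matrix.mul_assoc Y]

end IsSplitting

end Gauge

section BlockDiagonal

open Matrix

variable {R : Type*} [Semiring R] {k o : Type*} {m n : o → Type*} [Fintype o] [DecidableEq o]

theorem submatrix_mul_blockDiagonal' [∀ d, Fintype (m d)] (P : Matrix k (Σ d, m d) R)
    (E : ∀ d, Matrix (m d) (n d) R) (d : o) :
    (P * blockDiagonal' E).submatrix id (Sigma.mk d) = P.submatrix id (Sigma.mk d) * E d := by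
  ext r s
  rw [submatrix_apply, mul_apply, Fintype.sum_sigma, Fintype.sum_eq_single d]
  · simp only [blockDiagonal'_apply_eq, mul_apply, submatrix_apply, id]
  · exact fun d' hd' => Finset.sum_eq_zero fun t _ => by
      rw [blockDiagonal'_apply_ne _ _ _ hd', mul_zero]

theorem submatrix_blockDiagonal'_mul [∀ d, Fintype (n d)] (E : ∀ d, Matrix (m d) (n d) R)
    (P : Matrix (Σ d, n d) k R) (d : o) :
    (blockDiagonal' E * P).submatrix (Sigma.mk d) id = E d * P.submatrix (Sigma.mk d) id := by
  ext r s
  rw [submatrix_apply, mul_apply, Fintype.sum_sigma, Fintype.sum_eq_single d]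
  · simp only [blockDiagonal'_apply_eq, mul_apply, submatrix_apply, id]
  · exact fun d' hd' => Finset.sum_eq_zero fun t _ => by
      rw [blockDiagonal'_apply_ne _ _ _ hd'.symm, zero_mul]

end BlockDiagonal

section SigmaBlocks

variable {R k o : Type*} {n : o → Type*}

theorem forall_submatrix_mk_col_eq_iff {M N : Matrix k (Σ d, n d) R} :
    (∀ d, M.submatrix id (Sigma.mk d) = N.submatrix id (Sigma.mk d)) ↔ M = N :=
  ⟨fun h => Matrix.ext fun r z => congrFun₂ (h z.1) r z.2, fun h _ => h ▸ rfl⟩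

theorem forall_submatrix_mk_row_eq_iff {M N : Matrix (Σ d, n d) k R} :
    (∀ d, M.submatrix (Sigma.mk d) id = N.submatrix (Sigma.mk d) id) ↔ M = N :=
  ⟨fun h => Matrix.ext fun z s => congrFun₂ (h z.1) z.2 s, fun h _ => h ▸ rfl⟩

end SigmaBlocks

section FunctionAlgebra

variable {K : Type*} [Field K] {U V W : Type*}

/-- Pullback of `K`-valued functions along a map, as a homomorphism of algebras. -/
def pullback (K : Type*) [Field K] (π : U → V) : (V → K) →ₐ[K] (U → K) :=
  AlgHom.pi fun x => Pi.evalAlgHom K _ (π x)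

theorem pullback_injective {π : U → V} (hπ : π.Surjective) :
    Function.Injective (pullback K π) := fun _ _ h => hπ.injective_comp_right h

/-- The functions on `V` that agree along the correspondence `C` with some function in `B`. -/
def pullAlong (C : V → W → Prop) (B : Subalgebra K (W → K)) : Subalgebra K (V → K) :=
  (B.map (pullback K fun p : {p : V × W // C p.1 p.2} => p.1.2)).comap (pullback K fun p => p.1.1)

theorem mem_pullAlong {C : V → W → Prop} {B : Subalgebra K (W → K)} {f : V → K} :
    f ∈ pullAlong C B ↔ ∃ f' ∈ B, ∀ v w, C v w → f v = f' w := by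
  refine ⟨?_, ?_⟩
  · rintro ⟨f', hf', heq⟩
    exact ⟨f', hf', fun v w hvw => (congrFun heq ⟨(v, w), hvw⟩).symm⟩
  · rintro ⟨f', hf', heq⟩
    exact ⟨f', hf', funext fun p => (heq _ _ p.2).symm⟩

theorem nonempty_algEquiv_of_le_pullAlong {C : V → W → Prop} (hC : Relator.BiTotal C)
    {B : Subalgebra K (V → K)} {B' : Subalgebra K (W → K)} (h : B ≤ pullAlong C B')
    (h' : B' ≤ pullAlong (flip C) B) : Nonempty (B ≃ₐ[K] B') := by
  let π₁ : {p : V × W // C p.1 p.2} → V := fun p => p.1.1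
  let π₂ : {p : V × W // C p.1 p.2} → W := fun p => p.1.2
  have hπ₁ : π₁.Surjective := fun v => (hC.1 v).elim fun w hvw => ⟨⟨(v, w), hvw⟩, rfl⟩
  have hπ₂ : π₂.Surjective := fun w => (hC.2 w).elim fun v hvw => ⟨⟨(v, w), hvw⟩, rfl⟩
  have himage : B.map (pullback K π₁) = B'.map (pullback K π₂) := by
    apply le_antisymm (Subalgebra.map_le.mpr h)
    rintro _ ⟨f', hf', rfl⟩
    obtain ⟨f, hf, heq⟩ := mem_pullAlong.mp (h' hf')
    exact ⟨f, hf, funext fun p => (heq _ _ p.2).symm⟩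
  exact ⟨(B.equivMapOfInjective _ (pullback_injective hπ₁)).trans <|
    (Subalgebra.equivOfEq _ _ himage).trans
      (B'.equivMapOfInjective _ (pullback_injective hπ₂)).symm⟩

theorem inf_relInv_le_pullAlong {K V W : Type} [Field K] {C : V → W → Prop}
    {B : Subalgebra K (V → K)} {B' : Subalgebra K (W → K)} {R : V → V → Prop} {R' : W → W → Prop}
    (hC : Relator.RightTotal C) (hR : ∀ v w w', C v w → R' w w' → ∃ v', R v v' ∧ C v' w')
    (hB : B ⊓ relInv K R ≤ pullAlong C B') :
    B ⊓ relInv K R ≤ pullAlong C (B' ⊓ relInv K R') := by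
  intro f hf
  obtain ⟨f', hf', heq⟩ := mem_pullAlong.mp (hB hf)
  refine mem_pullAlong.mpr ⟨f', ⟨hf', fun w w' hww' => ?_⟩, heq⟩
  obtain ⟨v, hvw⟩ := hC w
  obtain ⟨v', hvv', hv'w'⟩ := hR v w w' hvw hww'
  rw [← heq v w hvw, hf.2 v v' hvv', heq v' w' hv'w']

theorem exists_pow_mul_mem_of_mem_adjoin {G : Set (V → K)} {A : Subalgebra K (V → K)} {d : V → K}
    (hd : d ∈ A) {φ : V → V}
    (hG : ∀ f ∈ G, ∃ N : ℕ, ∃ a ∈ A, ∀ v, d v ≠ 0 → d v ^ N * f (φ v) = a v)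
    {f : V → K} (hf : f ∈ Algebra.adjoin K G) :
    ∃ N : ℕ, ∃ a ∈ A, ∀ v, d v ≠ 0 → d v ^ N * f (φ v) = a v := by
  induction hf using Algebra.adjoin_induction with
  | mem f hf => exact hG f hf
  | algebraMap r => exact ⟨0, algebraMap K _ r, A.algebraMap_mem r, fun v _ => by simp⟩
  | add f g _ _ hf hg =>
    obtain ⟨n, a, ha, hf⟩ := hf
    obtain ⟨m, b, hb, hg⟩ := hg
    refine ⟨n + m, d ^ m * a + d ^ n * b,
      add_mem (mul_mem (pow_mem hd m) ha) (mul_mem (pow_mem hd n) hb), fun v hv => ?_⟩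
    simp only [Pi.add_apply, Pi.mul_apply, Pi.pow_apply, ← hf v hv, ← hg v hv]
    ring
  | mul f g _ _ hf hg =>
    obtain ⟨n, a, ha, hf⟩ := hf
    obtain ⟨m, b, hb, hg⟩ := hg
    refine ⟨n + m, a * b, mul_mem ha hb, fun v hv => ?_⟩
    simp only [Pi.mul_apply, ← hf v hv, ← hg v hv]
    ring

theorem exists_pow_mul_mem_of_invariant {G : Set (V → K)} {A : Subalgebra K (V → K)} {d : V → K}
    (hd : d ∈ A) {φ : V → V}
    (hG : ∀ f ∈ G, ∃ N : ℕ, ∃ a ∈ A, ∀ v, d v ≠ 0 → d v ^ N * f (φ v) = a v)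
    {f : V → K} (hf : f ∈ Algebra.adjoin K G) (hφ : ∀ v, d v ≠ 0 → f (φ v) = f v) :
    ∃ N : ℕ, d ^ N * f ∈ A := by
  obtain ⟨N, a, ha, heq⟩ := exists_pow_mul_mem_of_mem_adjoin hd hG hf
  refine ⟨N + 1, ?_⟩
  -- The extra factor `d` makes both sides vanish where `d` does.
  have hfa : d ^ (N + 1) * f = d * a := by
    funext v
    by_cases hv : d v = 0
    · simp [hv]
    · simp only [Pi.mul_apply, Pi.pow_apply, ← heq v hv, hφ v hv]
      ring
  rw [hfa]
  exact mul_mem hd ha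

end FunctionAlgebra

section MatrixOfFunctions

open Matrix

variable {K : Type*} [Field K] {V m n o ι : Type*} {A : Subalgebra K (V → K)}

/-- All entries of the matrix-valued function `M` belong to the algebra of functions `A`. -/
def HasEntriesIn (A : Subalgebra K (V → K)) (M : V → Matrix m n K) : Prop :=
  ∀ r s, (fun v => M v r s) ∈ A

namespace HasEntriesIn

theorem const (M : Matrix m n K) : HasEntriesIn A fun _ => M := fun r s => A.algebraMap_mem (M r s)

theorem mul [Fintype n] {M : V → Matrix m n K} {N : V → Matrix n o K} (hM : HasEntriesIn A M)
    (hN : HasEntriesIn A N) : HasEntriesIn A fun v => M v * N v := by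
  intro r s
  have hsum : (fun v => (M v * N v) r s) = ∑ x, (fun v => M v r x) * fun v => N v x s := by
    funext v
    simp only [Matrix.mul_apply, Finset.sum_apply, Pi.mul_apply]
  rw [hsum]
  exact sum_mem fun x _ => mul_mem (hM r x) (hN x s)

theorem submatrix {M : V → Matrix m n K} (hM : HasEntriesIn A M) {k l : Type*} (σ : k → m)
    (τ : l → n) : HasEntriesIn A fun v => (M v).submatrix σ τ := fun r s => hM (σ r) (τ s)

variable [Fintype ι] [DecidableEq ι] {M : V → Matrix ι ι K}

theorem det (hM : HasEntriesIn A M) : (fun v => (M v).det) ∈ A := by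
  let N : Matrix ι ι A := of fun r s => ⟨_, hM r s⟩
  have hN : (N.det : V → K) = fun v => (M v).det :=
    funext fun v => ((Pi.evalRingHom _ v).comp A.val.toRingHom).map_det N
  exact hN ▸ N.det.2

theorem adjugate (hM : HasEntriesIn A M) : HasEntriesIn A fun v => (M v).adjugate := by
  let N : Matrix ι ι A := of fun r s => ⟨_, hM r s⟩
  intro r s
  have hN : (N.adjugate r s : V → K) = fun v => (M v).adjugate r s := funext fun v =>
    congrFun₂ (((Pi.evalRingHom _ v).comp A.val.toRingHom).map_adjugate N) r s
  exact hN ▸ (N.adjugate r s).2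

end HasEntriesIn

end MatrixOfFunctions

end MarsdenWeinstein

namespace FinQuiver

open Matrix MarsdenWeinstein

section Double

variable (Q : FinQuiver)

/-- The involution `a ↦ a*` on the arrows of the double quiver. -/
def star (a : Q.DA) : Q.DA := Sum.swap a

/-- The sign of an arrow of the double quiver in the moment map: `1` on the arrows of `Q` and `-1`
on their reverses. -/
def sign (K : Type) [Field K] (a : Q.DA) : K := Sum.elim (fun _ => 1) (fun _ => -1) a

/-- The arrows of the double quiver with head `j`. -/
abbrev Into (j : Q.I) : Type := {a : Q.DA // Q.dh a = j}

variable {Q}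

theorem star_star (a : Q.DA) : Q.star (Q.star a) = a := Sum.swap_swap a

theorem dh_star (a : Q.DA) : Q.dh (Q.star a) = Q.dt a := by cases a <;> rfl

theorem dt_star (a : Q.DA) : Q.dt (Q.star a) = Q.dh a := by cases a <;> rfl

theorem sign_star (K : Type) [Field K] (a : Q.DA) : Q.sign K (Q.star a) = -Q.sign K a := by
  cases a <;> simp [sign, star]

theorem sign_mul_self (K : Type) [Field K] (a : Q.DA) : Q.sign K a * Q.sign K a = 1 := by
  cases a <;> simp [sign]

theorem sign_ne_zero (K : Type) [Field K] (a : Q.DA) : Q.sign K a ≠ 0 :=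
  left_ne_zero_of_mul_eq_one (sign_mul_self K a)

theorem sum_into {M : Type*} [AddCommMonoid M] (f : Q.DA → M) (i : Q.I) :
    ∑ d : Q.Into i, f d.1 = ∑ a, if Q.dh a = i then f a else 0 := by
  rw [← Finset.sum_filter]
  exact (Finset.sum_subtype _ (by simp) f).symm

end Double

section Padded

variable (Q : FinQuiver) (K S : Type) [Field K] [Fintype S]

/-- A representation of the double quiver by square matrices of one fixed format. Idempotent
matrices attached to the vertices single out the actual representation spaces, so that the
dimension vector can change without changing the format. -/
abbrev PaddedRep : Type := Q.DA → Matrix S S K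

variable {Q K S}

/-- The moment map on padded representations. -/
def paddedMoment (X : Q.PaddedRep K S) (j : Q.I) : Matrix S S K :=
  ∑ a : Q.Into j, Q.sign K a.1 • (X a.1 * X (Q.star a.1))

/-- The padded representation `X` is supported on the images of the idempotents `e` and lies in
the fibre of the moment map over `l`. -/
structure IsPaddedPoint (l : Q.I → K) (e : Q.I → Matrix S S K) (X : Q.PaddedRep K S) : Prop where
  head_mul (a : Q.DA) : e (Q.dh a) * X a = X a
  mul_tail (a : Q.DA) : X a * e (Q.dt a) = X a
  moment (j : Q.I) : paddedMoment X j = l j • e j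

/-- The fibre of the moment map on padded representations. -/
abbrev PaddedFiber (l : Q.I → K) (e : Q.I → Matrix S S K) : Type :=
  {X : Q.PaddedRep K S // IsPaddedPoint l e X}

/-- The matrix entries, as functions on the fibre. -/
def paddedCoord (l : Q.I → K) (e : Q.I → Matrix S S K) (c : Q.DA × S × S) (X : PaddedFiber l e) :
    K := X.1 c.1 c.2.1 c.2.2

theorem hasEntriesIn_adjoin_paddedCoord {l : Q.I → K} {e : Q.I → Matrix S S K}
    {a : Q.DA} : HasEntriesIn
    (Algebra.adjoin K (Set.range (paddedCoord l e))) fun X => X.1 a :=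
  fun r s => Algebra.subset_adjoin ⟨(a, r, s), rfl⟩

variable [DecidableEq S]

/-- The conjugation action on padded representations. -/
def gauge (g : Q.I → (Matrix S S K)ˣ) (X : Q.PaddedRep K S) : Q.PaddedRep K S :=
  fun a => (g (Q.dh a)).1 * X a * (g (Q.dt a))⁻¹.1

/-- Two points of the fibre are conjugate under the centraliser of the idempotents `e`. -/
def PaddedOrbit {l : Q.I → K} {e : Q.I → Matrix S S K} (X Y : PaddedFiber l e) : Prop :=
  ∃ g : Q.I → (Matrix S S K)ˣ, (∀ j, Commute (g j).1 (e j)) ∧ Y.1 = gauge g X.1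

/-- The invariant functions in the coordinate ring of the padded fibre. -/
def paddedRing (l : Q.I → K) (e : Q.I → Matrix S S K) : Subalgebra K (PaddedFiber l e → K) :=
  Algebra.adjoin K (Set.range (paddedCoord l e)) ⊓ relInv K PaddedOrbit

variable {l : Q.I → K} {e : Q.I → Matrix S S K} {X : Q.PaddedRep K S}

theorem paddedMoment_gauge (g : Q.I → (Matrix S S K)ˣ) (X : Q.PaddedRep K S) (j : Q.I) :
    paddedMoment (gauge g X) j = (g j).1 * paddedMoment X j * (g j)⁻¹.1 := by
  rw [paddedMoment, paddedMoment, Matrix.mul_sum, Matrix.sum_mul]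
  refine Finset.sum_congr rfl fun ⟨a, ha⟩ _ => ?_
  subst ha
  rw [Matrix.mul_smul, Matrix.smul_mul, gauge, gauge, dh_star, dt_star]
  simp only [Matrix.mul_assoc, Units.inv_mul_cancel_left]

theorem IsPaddedPoint.gauge (hX : IsPaddedPoint l e X) {g : Q.I → (Matrix S S K)ˣ}
    (hg : ∀ j, Commute (g j).1 (e j)) : IsPaddedPoint l e (gauge g X) where
  head_mul a := by
    rw [FinQuiver.gauge, ← Matrix.mul_assoc, ← Matrix.mul_assoc, ← (hg _).eq,
      Matrix.mul_assoc _ (e _), hX.head_mul]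
  mul_tail a := by
    rw [FinQuiver.gauge, Matrix.mul_assoc, ((hg _).units_inv_left).eq, ← Matrix.mul_assoc,
      Matrix.mul_assoc _ (X a), hX.mul_tail]
  moment j := by
    rw [paddedMoment_gauge, hX.moment, Matrix.mul_smul, Matrix.smul_mul, (hg j).eq,
      Units.mul_inv_cancel_right]

end Padded

section Padding

variable {Q : FinQuiver} {K S : Type} [Field K] [Fintype S] {l : Q.I → K}
  {e : Q.I → Matrix S S K} {α : Q.I → ℕ} {u : ∀ j, Matrix S (Fin (α j)) K}
  {w : ∀ j, Matrix (Fin (α j)) S K}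

/-- The padded representation attached to a representation and to splittings of the idempotents at
the vertices. -/
def pad (u : ∀ j, Matrix S (Fin (α j)) K) (w : ∀ j, Matrix (Fin (α j)) S K) (v : Q.Rep K α) :
    Q.PaddedRep K S := fun a => u (Q.dh a) * v a * w (Q.dt a)

/-- The representation on the images of the idempotents underlying a padded representation. -/
def unpad (u : ∀ j, Matrix S (Fin (α j)) K) (w : ∀ j, Matrix (Fin (α j)) S K)
    (X : Q.PaddedRep K S) : Q.Rep K α := fun a => w (Q.dh a) * X a * u (Q.dt a)

theorem unpad_pad (h : ∀ j, IsSplitting (e j) (u j) (w j)) (v : Q.Rep K α) :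
    unpad u w (pad u w v) = v := by
  funext a
  rw [unpad, pad, Matrix.mul_assoc, Matrix.mul_assoc, (h _).mul_eq_one, Matrix.mul_one,
    ← Matrix.mul_assoc, (h _).mul_eq_one, Matrix.one_mul]

theorem pad_unpad (h : ∀ j, IsSplitting (e j) (u j) (w j)) {X : Q.PaddedRep K S}
    (hX : IsPaddedPoint l e X) : pad u w (unpad u w X) = X := by
  funext a
  rw [pad, unpad, ← Matrix.mul_assoc, ← Matrix.mul_assoc, (h _).mul_eq, Matrix.mul_assoc,
    (h _).mul_eq, hX.head_mul, hX.mul_tail]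

theorem mul_submatrix_cast_mul {n : Type} (u : ∀ j, Matrix n (Fin (α j)) K)
    (w : ∀ j, Matrix (Fin (α j)) n K) {i j : Q.I} (M : Matrix (Fin (α i)) (Fin (α i)) K) :
    u j * (if h : i = j then M.submatrix (Fin.cast (congrArg α h).symm)
      (Fin.cast (congrArg α h).symm) else 0) * w j = if i = j then u i * M * w i else 0 := by
  split_ifs with h
  · subst h
    rfl
  · rw [Matrix.mul_zero, Matrix.zero_mul]

theorem paddedMoment_pad (h : ∀ j, IsSplitting (e j) (u j) (w j)) (v : Q.Rep K α) (j : Q.I) :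
    paddedMoment (pad u w v) j = u j * Q.moment K α v j * w j := by
  have hout (a : Q.A) : pad u w v (.inl a) * pad u w v (.inr a) =
      u (Q.h a) * (v (.inl a) * v (.inr a)) * w (Q.h a) := by
    simp only [pad, Matrix.mul_assoc]
    rw [← Matrix.mul_assoc (w _) (u _), (h _).mul_eq_one, Matrix.one_mul]
  have hin (a : Q.A) : pad u w v (.inr a) * pad u w v (.inl a) =
      u (Q.t a) * (v (.inr a) * v (.inl a)) * w (Q.t a) := by
    simp only [pad, Matrix.mul_assoc]
    rw [← Matrix.mul_assoc (w _) (u _), (h _).mul_eq_one, Matrix.one_mul]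
  rw [paddedMoment, sum_into fun a => Q.sign K a • (pad u w v a * pad u w v (Q.star a)),
    Fintype.sum_sum_type, moment, Matrix.mul_sub, Matrix.sub_mul,
    sub_eq_add_neg]
  simp only [Matrix.mul_sum, Matrix.sum_mul, mul_submatrix_cast_mul, ← hout, ← hin,
    ← Finset.sum_neg_distrib, star, sign, Sum.swap_inl, Sum.swap_inr, Sum.elim_inl, Sum.elim_inr,
    one_smul, neg_smul]
  congr 1
  exact Finset.sum_congr rfl fun a _ => by split_ifs <;> simp

theorem isPaddedPoint_pad (h : ∀ j, IsSplitting (e j) (u j) (w j)) {v : Q.Rep K α}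
    (hv : v ∈ Q.MomentFiber K l α) : IsPaddedPoint l e (pad u w v) where
  head_mul a := by rw [pad, ← Matrix.mul_assoc, ← Matrix.mul_assoc, (h _).mul_left]
  mul_tail a := by rw [pad, Matrix.mul_assoc, (h _).mul_right]
  moment j := by
    rw [paddedMoment_pad h, hv j, Matrix.mul_smul, Matrix.smul_mul, Matrix.mul_one, (h j).mul_eq]

theorem unpad_mem_momentFiber (h : ∀ j, IsSplitting (e j) (u j) (w j)) {X : Q.PaddedRep K S}
    (hX : IsPaddedPoint l e X) : unpad u w X ∈ Q.MomentFiber K l α := by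
  intro j
  have hmoment : u j * Q.moment K α (unpad u w X) j * w j = l j • e j := by
    rw [← paddedMoment_pad h, pad_unpad h hX, hX.moment]
  calc Q.moment K α (unpad u w X) j
      = w j * (u j * Q.moment K α (unpad u w X) j * w j) * u j := by
        rw [Matrix.mul_assoc, Matrix.mul_assoc, (h j).mul_eq_one, Matrix.mul_one,
          ← Matrix.mul_assoc, (h j).mul_eq_one, Matrix.one_mul]
    _ = l j • 1 := by
        rw [hmoment, Matrix.mul_smul, Matrix.smul_mul, (h j).mul_right, (h j).mul_eq_one]

theorem pad_glAct [DecidableEq S] (h : ∀ j, IsSplitting (e j) (u j) (w j)) (g : Q.Gl K α)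
    (v : Q.Rep K α) : pad u w (Q.glAct K α g v) =
      gauge (fun j => (h j).cornerUnit (g j)) (pad u w v) := by
  funext a
  rw [pad, gauge, glAct, (h _).inv_cornerUnit, pad]
  simp only [← Matrix.mul_assoc, (h _).cornerUnit_mul_left]
  simp only [Matrix.mul_assoc, (h _).mul_cornerUnit]

theorem unpad_gauge [DecidableEq S] (h : ∀ j, IsSplitting (e j) (u j) (w j))
    {g : Q.I → (Matrix S S K)ˣ} (hg : ∀ j, Commute (g j).1 (e j)) (X : Q.PaddedRep K S) :
    unpad u w (gauge g X) =
      Q.glAct K α (fun j => (h j).compressUnit (g j) (hg j)) (unpad u w X) := by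
  funext a
  calc w (Q.dh a) * ((g (Q.dh a)).1 * X a * (g (Q.dt a))⁻¹.1) * u (Q.dt a)
      = w (Q.dh a) * (g (Q.dh a)).1 * X a * ((g (Q.dt a))⁻¹.1 * u (Q.dt a)) := by
        simp only [Matrix.mul_assoc]
    _ = w (Q.dh a) * (g (Q.dh a)).1 * u (Q.dh a) * w (Q.dh a) * X a *
          (u (Q.dt a) * (w (Q.dt a) * (g (Q.dt a))⁻¹.1 * u (Q.dt a))) := by
        rw [(h _).compress_mul (hg _), (h _).mul_compress (hg _).units_inv_left]
    _ = w (Q.dh a) * (g (Q.dh a)).1 * u (Q.dh a) * (w (Q.dh a) * X a * u (Q.dt a)) *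
          (w (Q.dt a) * (g (Q.dt a))⁻¹.1 * u (Q.dt a)) := by
        simp only [Matrix.mul_assoc]

theorem fnRing_eq_adjoin (V : Set (Q.Rep K α)) : Q.fnRing K α V =
    Algebra.adjoin K (Set.range fun (c : Q.Coords α) (v : V) => v.1 c.1 c.2.1 c.2.2) :=
  (Algebra.adjoin_range_eq_range_aeval K _).symm

/-- The correspondence between the fibre of the moment map and its padded version. -/
def PadRel (u : ∀ j, Matrix S (Fin (α j)) K) (w : ∀ j, Matrix (Fin (α j)) S K)
    (v : Q.MomentFiber K l α) (X : PaddedFiber l e) : Prop := X.1 = pad u w v.1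

theorem biTotal_padRel (h : ∀ j, IsSplitting (e j) (u j) (w j)) :
    Relator.BiTotal (PadRel (l := l) (e := e) u w) :=
  ⟨fun v => ⟨⟨_, isPaddedPoint_pad h v.2⟩, rfl⟩,
    fun X => ⟨⟨_, unpad_mem_momentFiber h X.2⟩, (pad_unpad h X.2).symm⟩⟩

theorem invRing_le_pullAlong_padRel [DecidableEq S] (h : ∀ j, IsSplitting (e j) (u j) (w j)) :
    Q.InvRing K l α ≤ pullAlong (PadRel u w) (paddedRing l e) := by
  apply inf_relInv_le_pullAlong (biTotal_padRel h).2
  · rintro v X Y (hvX : X.1 = pad u w v.1) ⟨g, hg, hY⟩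
    refine ⟨⟨unpad u w Y.1, unpad_mem_momentFiber h Y.2⟩,
      ⟨fun j => (h j).compressUnit (g j) (hg j), ?_⟩, (pad_unpad h Y.2).symm⟩
    exact (congrArg _ hY).trans <| (unpad_gauge h hg X.1).trans <|
      congrArg _ (by rw [hvX, unpad_pad h])
  · refine inf_le_left.trans ?_
    rw [fnRing_eq_adjoin, Algebra.adjoin_le_iff]
    rintro _ ⟨⟨a, r, s⟩, rfl⟩
    refine mem_pullAlong.mpr ⟨fun X => unpad u w X.1 a r s,
      ((HasEntriesIn.const _).mul hasEntriesIn_adjoin_paddedCoord).mul (HasEntriesIn.const _) r s,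
      ?_⟩
    intro v X (hvX : X.1 = pad u w v.1)
    have hXv : unpad u w X.1 = v.1 := by rw [hvX, unpad_pad h]
    exact congrArg (fun Y : Q.Rep K α => Y a r s) hXv.symm

theorem paddedRing_le_pullAlong_flip_padRel [DecidableEq S]
    (h : ∀ j, IsSplitting (e j) (u j) (w j)) :
    paddedRing l e ≤ pullAlong (flip (PadRel u w)) (Q.InvRing K l α) := by
  apply inf_relInv_le_pullAlong (biTotal_padRel h).1
  · rintro X v v' (hvX : X.1 = pad u w v.1) ⟨g, hv'⟩
    refine ⟨⟨pad u w v'.1, isPaddedPoint_pad h v'.2⟩, ?_, rfl⟩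
    refine ⟨_, fun j => (h j).commute_cornerUnit (g j), ?_⟩
    rw [hvX, ← pad_glAct h]
    exact congrArg (pad u w) hv'
  · refine inf_le_left.trans (Algebra.adjoin_le ?_)
    rintro _ ⟨⟨a, r, s⟩, rfl⟩
    refine mem_pullAlong.mpr ⟨fun v => pad u w v.1 a r s, ?_,
      fun X v hvX => congrArg (fun Y => Y a r s) hvX⟩
    rw [fnRing_eq_adjoin]
    refine ((HasEntriesIn.const _).mul fun r s => ?_).mul (HasEntriesIn.const _) r s
    exact Algebra.subset_adjoin ⟨⟨a, r, s⟩, rfl⟩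

theorem nonempty_invRing_algEquiv_paddedRing [DecidableEq S]
    (h : ∀ j, IsSplitting (e j) (u j) (w j)) : Nonempty (Q.InvRing K l α ≃ₐ[K] paddedRing l e) :=
  nonempty_algEquiv_of_le_pullAlong (biTotal_padRel h) (invRing_le_pullAlong_padRel h)
    (paddedRing_le_pullAlong_flip_padRel h)

end Padding

section Reflections

variable {Q : FinQuiver} {i j : Q.I}

theorem Loopfree.dt_ne (hi : Q.Loopfree i) {a : Q.DA} (ha : Q.dh a = i) : Q.dt a ≠ i := by
  rcases a with a | a
  · exact fun ha' => hi a ⟨ha, ha'⟩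
  · exact fun ha' => hi a ⟨ha', ha⟩

theorem bil_ev (α : Q.I → ℤ) (i : Q.I) :
    Q.bil α (Q.ev i) = 2 * α i - ∑ d : Q.Into i, α (Q.dt d.1) := by
  have hstar : ∑ a : Q.DA, α (Q.dh a) * Q.ev i (Q.dt a) =
      ∑ a : Q.DA, if Q.dh a = i then α (Q.dt a) else 0 := by
    rw [← Equiv.sum_comp (Equiv.sumComm Q.A Q.A)]
    exact Finset.sum_congr rfl fun a _ => by cases a <;> simp [ev]
  rw [bil, hstar, sum_into fun a => α (Q.dt a)]
  simp [ev]

theorem refl_apply_of_ne (α : Q.I → ℤ) (hj : j ≠ i) : Q.refl i α j = α j := by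
  simp [refl, ev, hj]

theorem refl_apply_self (α : Q.I → ℤ) (i : Q.I) :
    Q.refl i α i = ∑ d : Q.Into i, α (Q.dt d.1) - α i := by
  simp only [refl, bil_ev, Pi.sub_apply, Pi.smul_apply, ev, if_true, smul_eq_mul]
  ring

theorem Loopfree.sum_refl_dt (hi : Q.Loopfree i) (α : Q.I → ℤ) :
    ∑ d : Q.Into i, Q.refl i α (Q.dt d.1) = ∑ d : Q.Into i, α (Q.dt d.1) :=
  Finset.sum_congr rfl fun d _ => refl_apply_of_ne α (hi.dt_ne d.2)

theorem Loopfree.refl_refl (hi : Q.Loopfree i) (α : Q.I → ℤ) : Q.refl i (Q.refl i α) = α := by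
  funext j
  by_cases hj : j = i
  · subst hj
    rw [refl_apply_self, hi.sum_refl_dt, refl_apply_self, sub_sub_cancel]
  · rw [refl_apply_of_ne _ hj, refl_apply_of_ne _ hj]

variable {K : Type} [Field K]

theorem Loopfree.coRefl_apply_self (hi : Q.Loopfree i) (l : Q.I → K) :
    Q.coRefl K i l i = -l i := by
  have hsum : ∑ d : Q.Into i, Q.ev i (Q.dt d.1) = 0 :=
    Finset.sum_eq_zero fun d _ => if_neg (hi.dt_ne d.2)
  rw [coRefl, bil_ev, hsum, ev, if_pos rfl]
  push_cast
  ring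

theorem coRefl_apply_of_ne (l : Q.I → K) (hj : j ≠ i) :
    Q.coRefl K i l j = l j + ∑ d : Q.Into j, if Q.dt d.1 = i then l i else 0 := by
  have hcard : ∑ d : Q.Into j, Q.ev i (Q.dt d.1) = ∑ d : Q.Into j, if Q.dt d.1 = i then 1 else 0 :=
    rfl
  rw [coRefl, bil_ev, hcard, ev, if_neg hj]
  push_cast
  rw [zero_sub, neg_mul, sub_neg_eq_add, Finset.sum_mul]
  simp only [ite_mul, one_mul, zero_mul]

theorem Loopfree.coRefl_coRefl (hi : Q.Loopfree i) (l : Q.I → K) :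
    Q.coRefl K i (Q.coRefl K i l) = l := by
  funext j
  rw [coRefl, hi.coRefl_apply_self, coRefl]
  ring

theorem AdmStep.symm {x y : (Q.I → K) × (Q.I → ℤ)} (h : Q.AdmStep K x y) : Q.AdmStep K y x := by
  obtain ⟨i, hi, hxi, hy₁, hy₂⟩ := h
  refine ⟨i, hi, ?_, ?_, ?_⟩
  · rw [hy₁, hi.coRefl_apply_self]
    exact neg_ne_zero.mpr hxi
  · rw [hy₁, hi.coRefl_coRefl]
  · rw [hy₂, hi.refl_refl]

end Reflections

section Vertex

variable {Q : FinQuiver} {K S : Type} {i : Q.I}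

/-- The arrows with tail `i`, indexed by their reverses, assembled into one block column. -/
def outMap (i : Q.I) (X : Q.PaddedRep K S) : Matrix (Σ _ : Q.Into i, S) S K :=
  of fun z s => X (Q.star z.1.1) z.2 s

theorem outMap_submatrix (X : Q.PaddedRep K S) (d : Q.Into i) :
    (outMap i X).submatrix (Sigma.mk d) id = X (Q.star d.1) := rfl

variable [Field K]

/-- The arrows with head `i`, signed as in the moment map, assembled into one block row. -/
def inMap (i : Q.I) (X : Q.PaddedRep K S) : Matrix S (Σ _ : Q.Into i, S) K :=
  of fun r z => Q.sign K z.1.1 * X z.1.1 r z.2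

theorem inMap_submatrix (X : Q.PaddedRep K S) (d : Q.Into i) :
    (inMap i X).submatrix id (Sigma.mk d) = Q.sign K d.1 • X d.1 := rfl

variable [Fintype S]

/-- The endomorphism of the sum of the spaces at the neighbours of `i` given by the paths of
length two through `i`. -/
def throughMap (i : Q.I) (X : Q.PaddedRep K S) :
    Matrix (Σ _ : Q.Into i, S) (Σ _ : Q.Into i, S) K := outMap i X * inMap i X

theorem throughMap_submatrix (X : Q.PaddedRep K S) (d d' : Q.Into i) :
    (throughMap i X).submatrix (Sigma.mk d) (Sigma.mk d') =
      Q.sign K d'.1 • (X (Q.star d.1) * X d'.1) := by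
  rw [← Matrix.mul_smul]
  rfl

theorem inMap_mul_outMap (X : Q.PaddedRep K S) : inMap i X * outMap i X = paddedMoment X i := by
  ext r s
  rw [Matrix.mul_apply, Fintype.sum_sigma, paddedMoment, Matrix.sum_apply]
  refine Finset.sum_congr rfl fun d _ => ?_
  rw [← Matrix.smul_mul, Matrix.mul_apply]
  rfl

theorem mul_inMap_eq_iff {E : Matrix S S K} {X : Q.PaddedRep K S} :
    E * inMap i X = inMap i X ↔ ∀ d : Q.Into i, E * X d.1 = X d.1 := by
  rw [← forall_submatrix_mk_col_eq_iff]
  refine forall_congr' fun d => ?_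
  have hblock : (E * inMap i X).submatrix id (Sigma.mk d) = Q.sign K d.1 • (E * X d.1) := by
    rw [← Matrix.mul_smul]
    rfl
  rw [hblock, inMap_submatrix, smul_right_inj (sign_ne_zero K d.1)]

theorem outMap_mul_eq_iff {E : Matrix S S K} {X : Q.PaddedRep K S} :
    outMap i X * E = outMap i X ↔ ∀ d : Q.Into i, X (Q.star d.1) * E = X (Q.star d.1) :=
  forall_submatrix_mk_row_eq_iff.symm

variable [DecidableEq Q.A]

theorem inMap_mul_blockDiagonal'_eq_iff {E : Q.Into i → Matrix S S K} {X : Q.PaddedRep K S} :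
    inMap i X * blockDiagonal' E = inMap i X ↔ ∀ d : Q.Into i, X d.1 * E d = X d.1 := by
  rw [← forall_submatrix_mk_col_eq_iff]
  refine forall_congr' fun d => ?_
  rw [submatrix_mul_blockDiagonal', inMap_submatrix, Matrix.smul_mul,
    smul_right_inj (sign_ne_zero K d.1)]

theorem blockDiagonal'_mul_outMap_eq_iff {E : Q.Into i → Matrix S S K} {X : Q.PaddedRep K S} :
    blockDiagonal' E * outMap i X = outMap i X ↔
      ∀ d : Q.Into i, E d * X (Q.star d.1) = X (Q.star d.1) := by
  simp only [← forall_submatrix_mk_row_eq_iff (M := blockDiagonal' E * outMap i X),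
    submatrix_blockDiagonal'_mul, outMap_submatrix]

variable [DecidableEq S] (g : Q.I → (Matrix S S K)ˣ) (X : Q.PaddedRep K S)

theorem inMap_gauge : inMap i (gauge g X) =
    (g i).1 * inMap i X * blockDiagonal' fun d : Q.Into i => (g (Q.dt d.1))⁻¹.1 := by
  refine forall_submatrix_mk_col_eq_iff.mp fun d => ?_
  have hblock : ((g i).1 * inMap i X).submatrix id (Sigma.mk d) =
      Q.sign K d.1 • ((g i).1 * X d.1) := by
    rw [← Matrix.mul_smul]
    rfl
  rw [submatrix_mul_blockDiagonal', hblock, inMap_submatrix, gauge, Matrix.smul_mul, d.2]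

theorem outMap_gauge : outMap i (gauge g X) =
    (blockDiagonal' fun d : Q.Into i => (g (Q.dt d.1)).1) * outMap i X * (g i)⁻¹.1 := by
  refine forall_submatrix_mk_row_eq_iff.mp fun d => ?_
  rw [Matrix.mul_assoc, submatrix_blockDiagonal'_mul, outMap_submatrix, gauge, dh_star, dt_star,
    d.2, Matrix.mul_assoc]
  rfl

theorem throughMap_gauge : throughMap i (gauge g X) =
    (blockDiagonal' fun d : Q.Into i => (g (Q.dt d.1)).1) * throughMap i X *
      blockDiagonal' fun d : Q.Into i => (g (Q.dt d.1))⁻¹.1 := by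
  rw [throughMap, outMap_gauge, inMap_gauge, throughMap]
  simp only [Matrix.mul_assoc]
  rw [← Matrix.mul_assoc (g i)⁻¹.1, Units.inv_mul, Matrix.one_mul]

end Vertex

section Reglue

variable {Q : FinQuiver} {K S : Type} [Field K] {i : Q.I}

/-- The reverse of an arrow with tail `i`, as an arrow with head `i`. -/
def starInto (a : Q.DA) (ha : Q.dt a = i) : Q.Into i := ⟨Q.star a, (dh_star a).trans ha⟩

theorem coe_starInto (a : Q.DA) (ha : Q.dt a = i) : (starInto a ha).1 = Q.star a := rfl

/-- The padded representation that agrees with `X` away from the vertex `i` and has the maps `P`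
into and `R` out of `i`. -/
def reglue (i : Q.I) (X : Q.PaddedRep K S) (P : Matrix S (Σ _ : Q.Into i, S) K)
    (R : Matrix (Σ _ : Q.Into i, S) S K) : Q.PaddedRep K S := fun a =>
  if hh : Q.dh a = i then Q.sign K a • P.submatrix id (Sigma.mk ⟨a, hh⟩)
  else if ht : Q.dt a = i then R.submatrix (fun r => ⟨starInto a ht, r⟩) id
  else X a

variable {X : Q.PaddedRep K S} {P : Matrix S (Σ _ : Q.Into i, S) K}
  {R : Matrix (Σ _ : Q.Into i, S) S K}

theorem reglue_of_ne {a : Q.DA} (hh : Q.dh a ≠ i) (ht : Q.dt a ≠ i) : reglue i X P R a = X a := by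
  rw [reglue, dif_neg hh, dif_neg ht]

theorem inMap_reglue : inMap i (reglue i X P R) = P := by
  refine forall_submatrix_mk_col_eq_iff.mp fun d => ?_
  rw [inMap_submatrix, reglue, dif_pos d.2, smul_smul, sign_mul_self, one_smul]

theorem Loopfree.outMap_reglue (hi : Q.Loopfree i) : outMap i (reglue i X P R) = R := by
  refine forall_submatrix_mk_row_eq_iff.mp fun d => ?_
  have hh : Q.dh (Q.star d.1) ≠ i := dh_star d.1 ▸ hi.dt_ne d.2
  have ht : Q.dt (Q.star d.1) = i := (dt_star d.1).trans d.2
  have hd : starInto (Q.star d.1) ht = d := Subtype.ext (star_star d.1)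
  rw [outMap_submatrix, reglue, dif_neg hh, dif_pos ht, hd]

end Reglue

section ReflectedPoints

variable {Q : FinQuiver} {K S : Type} [Field K] {i : Q.I}

section Pair

variable [Fintype S] {l : Q.I → K} {e e' : Q.I → Matrix S S K}

/-- Idempotents whose ranks are the dimension vectors before and after the admissible reflection
at `i` of the weight `l`. -/
structure IsReflectionPair (i : Q.I) (l : Q.I → K) (e e' : Q.I → Matrix S S K) : Prop where
  loopfree : Q.Loopfree i
  ne_zero : l i ≠ 0
  isIdempotentElem (j : Q.I) : IsIdempotentElem (e j)
  isIdempotentElem' : IsIdempotentElem (e' i)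
  eq_of_ne {j : Q.I} (hj : j ≠ i) : e' j = e j
  rank_add_rank : (e' i).rank + (e i).rank = ∑ d : Q.Into i, (e (Q.dt d.1)).rank

theorem IsReflectionPair.symm (h : IsReflectionPair i l e e') :
    IsReflectionPair i (Q.coRefl K i l) e' e where
  loopfree := h.loopfree
  ne_zero := by
    rw [h.loopfree.coRefl_apply_self]
    exact neg_ne_zero.mpr h.ne_zero
  isIdempotentElem j := by
    by_cases hj : j = i
    · exact hj ▸ h.isIdempotentElem'
    · exact h.eq_of_ne hj ▸ h.isIdempotentElem j
  isIdempotentElem' := h.isIdempotentElem i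
  eq_of_ne hj := (h.eq_of_ne hj).symm
  rank_add_rank := by
    rw [add_comm, h.rank_add_rank]
    exact Finset.sum_congr rfl fun d _ => by rw [h.eq_of_ne (h.loopfree.dt_ne d.2)]

end Pair

variable [DecidableEq Q.A]

/-- The projection onto the sum of the spaces at the neighbours of `i`, with one summand for each
arrow with head `i`. -/
def neighbourIdempotent (i : Q.I) (e : Q.I → Matrix S S K) :
    Matrix (Σ _ : Q.Into i, S) (Σ _ : Q.Into i, S) K :=
  blockDiagonal' fun d => e (Q.dt d.1)

variable [Fintype S]

/-- The padded representations `X` and `Y` agree away from the vertex `i`, and their maps through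
`i` differ by the scalar `c`. For points of the fibres over `l` and over its reflection at `i`, with
`c = l i`, this correspondence induces the reflection isomorphism. -/
structure AreReflected (i : Q.I) (c : K) (e : Q.I → Matrix S S K) (X Y : Q.PaddedRep K S) :
    Prop where
  eq_of_ne {a : Q.DA} (hh : Q.dh a ≠ i) (ht : Q.dt a ≠ i) : Y a = X a
  throughMap_eq : throughMap i Y = throughMap i X - c • neighbourIdempotent i e

variable {l : Q.I → K} {e e' : Q.I → Matrix S S K} {X Y : Q.PaddedRep K S} {c : K}

theorem Loopfree.neighbourIdempotent_congr {S : Type} {e e' : Q.I → Matrix S S K}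
    (hi : Q.Loopfree i) (h : ∀ {j}, j ≠ i → e' j = e j) :
    neighbourIdempotent i e' = neighbourIdempotent i e :=
  congrArg blockDiagonal' <| funext fun d => h (hi.dt_ne d.2)

theorem AreReflected.symm (h : AreReflected i c e X Y) (hi : Q.Loopfree i)
    (he : ∀ {j}, j ≠ i → e' j = e j) : AreReflected i (-c) e' Y X where
  eq_of_ne hh ht := (h.eq_of_ne hh ht).symm
  throughMap_eq := by
    rw [h.throughMap_eq, hi.neighbourIdempotent_congr he, neg_smul, sub_neg_eq_add,
      sub_add_cancel]

theorem AreReflected.gauge [DecidableEq S] (h : AreReflected i c e X Y) (hi : Q.Loopfree i)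
    {g g' : Q.I → (Matrix S S K)ˣ} (hg : ∀ {j}, j ≠ i → Commute (g j).1 (e j))
    (hgg' : ∀ {j}, j ≠ i → g' j = g j) : AreReflected i c e (gauge g X) (gauge g' Y) where
  eq_of_ne hh ht := by
    rw [FinQuiver.gauge, FinQuiver.gauge, h.eq_of_ne hh ht, hgg' hh, hgg' ht]
  throughMap_eq := by
    have hconj : (blockDiagonal' fun d : Q.Into i => (g (Q.dt d.1)).1) * neighbourIdempotent i e *
        (blockDiagonal' fun d : Q.Into i => (g (Q.dt d.1))⁻¹.1) = neighbourIdempotent i e := by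
      rw [neighbourIdempotent, ← blockDiagonal'_mul, ← blockDiagonal'_mul]
      congr 1
      funext d
      rw [(hg (hi.dt_ne d.2)).eq, Units.mul_inv_cancel_right]
    have hneighbour : (fun d : Q.Into i => g' (Q.dt d.1)) = fun d => g (Q.dt d.1) :=
      funext fun d => hgg' (hi.dt_ne d.2)
    have hinv := congrArg (fun f => blockDiagonal' fun d => (f d)⁻¹.1) hneighbour
    have hval := congrArg (fun f => blockDiagonal' fun d => (f d).1) hneighbour
    simp only at hinv hval
    rw [throughMap_gauge, throughMap_gauge, h.throughMap_eq, hval, hinv, Matrix.mul_sub,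
      Matrix.sub_mul, Matrix.mul_smul, Matrix.smul_mul, hconj]

theorem Loopfree.areReflected_reglue (hi : Q.Loopfree i) {P : Matrix S (Σ _ : Q.Into i, S) K}
    {R : Matrix (Σ _ : Q.Into i, S) S K}
    (hRP : R * P = throughMap i X - c • neighbourIdempotent i e) :
    AreReflected i c e X (reglue i X P R) where
  eq_of_ne hh ht := reglue_of_ne hh ht
  throughMap_eq := by rw [throughMap, inMap_reglue, hi.outMap_reglue, hRP]

theorem AreReflected.smul_mul_star (h : AreReflected i c e X Y) {a : Q.DA} (ha : Q.dt a = i) :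
    Q.sign K a • (Y a * Y (Q.star a)) =
      Q.sign K a • (X a * X (Q.star a)) + c • e (Q.dh a) := by
  have hF : (neighbourIdempotent i e).submatrix (Sigma.mk (starInto a ha))
      (Sigma.mk (starInto a ha)) = e (Q.dh a) := by
    ext r s
    rw [neighbourIdempotent, submatrix_apply, blockDiagonal'_apply_eq, coe_starInto, dt_star]
  have hblock := congrArg (fun M => M.submatrix (Sigma.mk (starInto a ha))
    (Sigma.mk (starInto a ha))) h.throughMap_eq
  simp only [submatrix_sub, submatrix_smul, Pi.sub_apply, Pi.smul_apply, throughMap_submatrix, hF,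
    coe_starInto, star_star, sign_star, neg_smul] at hblock
  rw [← neg_inj, hblock, neg_add, sub_eq_add_neg]

theorem AreReflected.paddedMoment_of_ne (h : AreReflected i (l i) e X Y) {j : Q.I} (hj : j ≠ i)
    (hX : paddedMoment X j = l j • e j) : paddedMoment Y j = Q.coRefl K i l j • e j := by
  rw [coRefl_apply_of_ne l hj, add_smul, ← hX, Finset.sum_smul, paddedMoment, paddedMoment,
    ← Finset.sum_add_distrib]
  refine Finset.sum_congr rfl fun ⟨a, ha⟩ _ => ?_
  by_cases ht : Q.dt a = i
  · rw [h.smul_mul_star ht, if_pos ht, ha]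
  · have hstar : Y (Q.star a) = X (Q.star a) :=
      h.eq_of_ne (dh_star a ▸ ht) (dt_star a ▸ ha ▸ hj)
    rw [h.eq_of_ne (ha ▸ hj) ht, hstar, if_neg ht, zero_smul, add_zero]

end ReflectedPoints

section Existence

variable {Q : FinQuiver} {K S : Type} [Field K] [Fintype S] {i : Q.I} {l : Q.I → K}
  {e e' : Q.I → Matrix S S K} {X Y : Q.PaddedRep K S}

namespace IsPaddedPoint

theorem mul_inMap (hX : IsPaddedPoint l e X) (i : Q.I) : e i * inMap i X = inMap i X :=
  mul_inMap_eq_iff.mpr <| by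
    rintro ⟨a, rfl⟩
    exact hX.head_mul a

theorem outMap_mul (hX : IsPaddedPoint l e X) (i : Q.I) : outMap i X * e i = outMap i X :=
  outMap_mul_eq_iff.mpr <| by
    rintro ⟨a, rfl⟩
    simpa only [dt_star] using hX.mul_tail (Q.star a)

theorem inMap_mul_outMap (hX : IsPaddedPoint l e X) (i : Q.I) :
    inMap i X * outMap i X = l i • e i := by
  rw [FinQuiver.inMap_mul_outMap, hX.moment]

variable [DecidableEq Q.A]

theorem inMap_mul_neighbourIdempotent (hX : IsPaddedPoint l e X) (i : Q.I) :
    inMap i X * neighbourIdempotent i e = inMap i X :=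
  inMap_mul_blockDiagonal'_eq_iff.mpr fun d => hX.mul_tail d.1

theorem neighbourIdempotent_mul_outMap (hX : IsPaddedPoint l e X) (i : Q.I) :
    neighbourIdempotent i e * outMap i X = outMap i X :=
  blockDiagonal'_mul_outMap_eq_iff.mpr fun d => by rw [← dh_star, hX.head_mul]

end IsPaddedPoint

variable [DecidableEq Q.A]

theorem head_mul_of_vertex {a : Q.DA} (hin : e i * inMap i X = inMap i X)
    (hout : neighbourIdempotent i e * outMap i X = outMap i X)
    (hne : Q.dh a ≠ i → Q.dt a ≠ i → e (Q.dh a) * X a = X a) : e (Q.dh a) * X a = X a := by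
  by_cases hh : Q.dh a = i
  · exact hh ▸ mul_inMap_eq_iff.mp hin ⟨a, hh⟩
  by_cases ht : Q.dt a = i
  · simpa only [coe_starInto, star_star, dt_star] using
      blockDiagonal'_mul_outMap_eq_iff.mp hout (starInto a ht)
  · exact hne hh ht

theorem mul_tail_of_vertex {a : Q.DA} (hin : inMap i X * neighbourIdempotent i e = inMap i X)
    (hout : outMap i X * e i = outMap i X)
    (hne : Q.dh a ≠ i → Q.dt a ≠ i → X a * e (Q.dt a) = X a) : X a * e (Q.dt a) = X a := by
  by_cases ht : Q.dt a = i
  · simpa only [coe_starInto, star_star, ht] using outMap_mul_eq_iff.mp hout (starInto a ht)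
  by_cases hh : Q.dh a = i
  · exact inMap_mul_blockDiagonal'_eq_iff.mp hin ⟨a, hh⟩
  · exact hne hh ht

namespace IsReflectionPair

theorem isIdempotentElem_neighbourIdempotent (h : IsReflectionPair i l e e') :
    IsIdempotentElem (neighbourIdempotent i e) :=
  isIdempotentElem_blockDiagonal' fun _ => h.isIdempotentElem _

theorem rank_add_rank_eq_rank_neighbourIdempotent (h : IsReflectionPair i l e e') :
    (e' i).rank + (e i).rank = (neighbourIdempotent i e).rank :=
  h.rank_add_rank.trans
    (rank_blockDiagonal'_of_isIdempotentElem fun _ => h.isIdempotentElem _).symm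

theorem isPaddedPoint_of_areReflected (h : IsReflectionPair i l e e') (hX : IsPaddedPoint l e X)
    (hXY : AreReflected i (l i) e X Y) (hmoment : inMap i Y * outMap i Y = (-l i) • e' i)
    (hin : e' i * inMap i Y = inMap i Y)
    (hin' : inMap i Y * neighbourIdempotent i e = inMap i Y)
    (hout : outMap i Y * e' i = outMap i Y)
    (hout' : neighbourIdempotent i e * outMap i Y = outMap i Y) :
    IsPaddedPoint (Q.coRefl K i l) e' Y := by
  rw [← h.loopfree.neighbourIdempotent_congr h.eq_of_ne] at hin' hout'
  refine ⟨fun a => head_mul_of_vertex hin hout' fun hh ht => ?_,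
    fun a => mul_tail_of_vertex hin' hout fun hh ht => ?_, fun j => ?_⟩
  · rw [hXY.eq_of_ne hh ht, h.eq_of_ne hh, hX.head_mul]
  · rw [hXY.eq_of_ne hh ht, h.eq_of_ne ht, hX.mul_tail]
  by_cases hj : j = i
  · rw [hj, h.loopfree.coRefl_apply_self, ← inMap_mul_outMap, hmoment]
  · rw [h.eq_of_ne hj, hXY.paddedMoment_of_ne hj (hX.moment j)]

theorem exists_areReflected (h : IsReflectionPair i l e e') (hX : IsPaddedPoint l e X) :
    ∃ Y, IsPaddedPoint (Q.coRefl K i l) e' Y ∧ AreReflected i (l i) e X Y := by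
  obtain ⟨P, R, hPR, hRP, hEP, hPF, hFR, hRE⟩ := exists_complementary_mul h.ne_zero
    (h.isIdempotentElem i) h.isIdempotentElem' h.isIdempotentElem_neighbourIdempotent
    (hX.inMap_mul_outMap i) (hX.mul_inMap i) (hX.inMap_mul_neighbourIdempotent i)
    (hX.neighbourIdempotent_mul_outMap i) h.rank_add_rank_eq_rank_neighbourIdempotent
  have hXY : AreReflected i (l i) e X (reglue i X P R) := h.loopfree.areReflected_reglue hRP
  refine ⟨_, h.isPaddedPoint_of_areReflected hX hXY ?_ ?_ ?_ ?_ ?_, hXY⟩ <;>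
    simpa only [inMap_reglue, h.loopfree.outMap_reglue]

end IsReflectionPair

end Existence

section FirstFundamentalTheorem

variable {Q : FinQuiver} {K S : Type} [Field K] [Fintype S] [DecidableEq S] {i : Q.I}
  {l : Q.I → K} {e : Q.I → Matrix S S K}

theorem Loopfree.inMap_gauge_mulSingle (hi : Q.Loopfree i) (g : (Matrix S S K)ˣ)
    (X : Q.PaddedRep K S) : inMap i (gauge (Pi.mulSingle i g) X) = g.1 * inMap i X := by
  classical
  have hone : (fun d : Q.Into i =>
      (Pi.mulSingle (M := fun _ => (Matrix S S K)ˣ) i g (Q.dt d.1))⁻¹.1) = 1 := by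
    funext d
    rw [Pi.mulSingle_eq_of_ne (hi.dt_ne d.2), inv_one]
    rfl
  rw [inMap_gauge, Pi.mulSingle_eq_same, hone, blockDiagonal'_one, Matrix.mul_one]

theorem Loopfree.outMap_gauge_mulSingle (hi : Q.Loopfree i) (g : (Matrix S S K)ˣ)
    (X : Q.PaddedRep K S) : outMap i (gauge (Pi.mulSingle i g) X) = outMap i X * g⁻¹.1 := by
  classical
  have hone : (fun d : Q.Into i =>
      (Pi.mulSingle (M := fun _ => (Matrix S S K)ˣ) i g (Q.dt d.1)).1) = 1 := by
    funext d
    rw [Pi.mulSingle_eq_of_ne (hi.dt_ne d.2)]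
    rfl
  rw [outMap_gauge, Pi.mulSingle_eq_same, hone, blockDiagonal'_one, Matrix.one_mul]

theorem gauge_mulSingle_of_ne (g : (Matrix S S K)ˣ) (X : Q.PaddedRep K S) {a : Q.DA}
    (hh : Q.dh a ≠ i) (ht : Q.dt a ≠ i) : gauge (Pi.mulSingle i g) X a = X a := by
  rw [gauge, Pi.mulSingle_eq_of_ne hh, Pi.mulSingle_eq_of_ne ht, inv_one, Units.val_one,
    Matrix.one_mul, Matrix.mul_one]

theorem exists_paddedOrbit_mulSingle {ι : Type} [Fintype ι] [DecidableEq ι] {u : Matrix S ι K}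
    {w : Matrix ι S K} (h : IsSplitting (e i) u w) (hi : Q.Loopfree i) {σ : ι → Σ _ : Q.Into i, S}
    (X : PaddedFiber l e) (hσ : ((throughMap i X.1).submatrix σ σ).det ≠ 0) :
    ∃ Y : PaddedFiber l e, PaddedOrbit X Y ∧
      (∀ a, Q.dh a ≠ i → Q.dt a ≠ i → Y.1 a = X.1 a) ∧
      ((throughMap i X.1).submatrix σ σ).det • inMap i Y.1 =
        u * (((throughMap i X.1).submatrix σ σ).adjugate * (throughMap i X.1).submatrix σ id) ∧
      outMap i Y.1 = (throughMap i X.1).submatrix id σ * w := by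
  obtain ⟨g, hg, hin, hout⟩ := h.exists_gauge (X.2.mul_inMap i) (X.2.outMap_mul i) hσ.isUnit
  have hcomm (j : Q.I) : Commute (Pi.mulSingle (M := fun _ => (Matrix S S K)ˣ) i g j).1 (e j) := by
    by_cases hj : j = i
    · subst hj
      rwa [Pi.mulSingle_eq_same]
    · rw [Pi.mulSingle_eq_of_ne hj]
      exact Commute.one_left _
  refine ⟨⟨_, X.2.gauge hcomm⟩, ⟨_, hcomm, rfl⟩,
    fun a hh ht => gauge_mulSingle_of_ne g X.1 hh ht, ?_, ?_⟩
  · rw [hi.inMap_gauge_mulSingle]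
    exact hin
  · rw [hi.outMap_gauge_mulSingle]
    exact hout

theorem Loopfree.exists_pow_det_mul_mem (hi : Q.Loopfree i) {ι : Type} [Fintype ι] [DecidableEq ι]
    {u : Matrix S ι K} {w : Matrix ι S K} (h : IsSplitting (e i) u w)
    (σ : ι → Σ _ : Q.Into i, S) {A : Subalgebra K (PaddedFiber l e → K)}
    (hA : ∀ a, Q.dh a ≠ i → Q.dt a ≠ i → HasEntriesIn A fun X => X.1 a)
    (hthrough : HasEntriesIn A fun X => throughMap i X.1) {f : PaddedFiber l e → K}
    (hf : f ∈ paddedRing l e) :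
    ∃ N : ℕ, (fun X => ((throughMap i X.1).submatrix σ σ).det) ^ N * f ∈ A := by
  have hgauge (X : PaddedFiber l e) (hX : ((throughMap i X.1).submatrix σ σ).det ≠ 0) :=
    exists_paddedOrbit_mulSingle h hi X hX
  choose! φ horbit hoff hin hout using hgauge
  refine exists_pow_mul_mem_of_invariant (hthrough.submatrix σ σ).det (φ := φ) ?_ hf.1
    fun X hX => (hf.2 _ _ (horbit X hX)).symm
  rintro _ ⟨⟨a, r, s⟩, rfl⟩
  by_cases hh : Q.dh a = i
  · refine ⟨1, _, A.smul_mem ((HasEntriesIn.const u).mul ((hthrough.submatrix σ σ).adjugate.mul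
      (hthrough.submatrix σ id)) r ⟨⟨a, hh⟩, s⟩) (Q.sign K a), fun X hX => ?_⟩
    refine Eq.trans ?_ (congrArg (Q.sign K a * ·) (congrFun₂ (hin X hX) r ⟨⟨a, hh⟩, s⟩))
    simp only [Matrix.smul_apply, smul_eq_mul, inMap, of_apply, paddedCoord]
    linear_combination (-((throughMap i X.1).submatrix σ σ).det * (φ X).1 a r s) *
      sign_mul_self K a
  by_cases ht : Q.dt a = i
  · refine ⟨0, _, (hthrough.submatrix id σ).mul (.const w) ⟨starInto a ht, r⟩ s, fun X hX => ?_⟩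
    have hentry := congrFun₂ (hout X hX) ⟨starInto a ht, r⟩ s
    rw [outMap, of_apply, coe_starInto, star_star] at hentry
    rw [pow_zero, one_mul]
    exact hentry
  · refine ⟨0, _, hA a hh ht r s, fun X hX => ?_⟩
    rw [pow_zero, one_mul]
    exact congrFun₂ (hoff X hX a hh ht) r s

theorem IsPaddedPoint.sum_minors_throughMap [DecidableEq Q.A] {X : Q.PaddedRep K S}
    (hX : IsPaddedPoint l e X) (he : IsIdempotentElem (e i)) :
    ∑ s ∈ Finset.univ.powersetCard (e i).rank,
      ((throughMap i X).submatrix (Subtype.val : s → Σ _ : Q.Into i, S) Subtype.val).det =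
        l i ^ (e i).rank := by
  obtain ⟨u, w, h⟩ := exists_isSplitting (ι := Fin (e i).rank) he (Fintype.card_fin _)
  simpa only [Fintype.card_fin, throughMap] using
    h.sum_principal_minors (hX.mul_inMap i) (hX.inMap_mul_outMap i)

theorem Loopfree.paddedRing_le (hi : Q.Loopfree i) (hl : l i ≠ 0)
    (he : IsIdempotentElem (e i)) {A : Subalgebra K (PaddedFiber l e → K)}
    (hA : ∀ a, Q.dh a ≠ i → Q.dt a ≠ i → HasEntriesIn A fun X => X.1 a)
    (hthrough : HasEntriesIn A fun X => throughMap i X.1) : paddedRing l e ≤ A := by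
  classical
  intro f hf
  let minors := Finset.univ.powersetCard (e i).rank (α := Σ _ : Q.Into i, S)
  let minor (s : minors) (X : PaddedFiber l e) : K :=
    ((throughMap i X.1).submatrix (Subtype.val : s.1 → Σ _ : Q.Into i, S) Subtype.val).det
  have hsum : ∑ s, algebraMap K (PaddedFiber l e → K) (l i ^ (e i).rank)⁻¹ * minor s = 1 := by
    funext X
    rw [← Finset.mul_sum, Pi.mul_apply, Finset.sum_apply,
      Finset.sum_coe_sort minors fun s =>
        ((throughMap i X.1).submatrix (Subtype.val : s → Σ _ : Q.Into i, S) Subtype.val).det,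
      X.2.sum_minors_throughMap he]
    exact inv_mul_cancel₀ (pow_ne_zero _ hl)
  refine A.mem_of_finsetSum_eq_one_of_pow_smul_mem Finset.univ minor _ hsum
    (fun _ => (hthrough.submatrix _ _).det) (fun _ => A.algebraMap_mem _) f fun s => ?_
  obtain ⟨u, w, h⟩ := exists_isSplitting (ι := s.1) he <|
    (Fintype.card_coe _).trans (Finset.mem_powersetCard.mp s.2).2
  exact hi.exists_pow_det_mul_mem h Subtype.val hA hthrough hf

end FirstFundamentalTheorem

section ReflectionIsomorphism

variable {Q : FinQuiver} {K S : Type} [Field K] [Fintype S] {i : Q.I} {l l' : Q.I → K}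
  {e e' : Q.I → Matrix S S K}

theorem hasEntriesIn_adjoin_throughMap : HasEntriesIn
    (Algebra.adjoin K (Set.range (paddedCoord l e))) fun X => throughMap i X.1 := by
  refine HasEntriesIn.mul (fun r s => hasEntriesIn_adjoin_paddedCoord r.2 s) fun r s => ?_
  exact Subalgebra.smul_mem _ (hasEntriesIn_adjoin_paddedCoord r s.2) (Q.sign K s.1.1)

section Correspondence

variable [DecidableEq Q.A]

/-- The correspondence `AreReflected` between a fibre over `l` and a fibre over the reflection of
`l` at `i`. -/
def ReflectionRel (i : Q.I) (X : PaddedFiber l e) (Y : PaddedFiber l' e') : Prop :=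
  AreReflected i (l i) e X.1 Y.1

namespace IsReflectionPair

variable (h : IsReflectionPair i l e e')
include h

theorem flip_reflectionRel (hl' : l' = Q.coRefl K i l) :
    flip (ReflectionRel (l := l) (e := e) (l' := l') (e' := e') i) = ReflectionRel i := by
  have hli : l' i = -l i := by rw [hl', h.loopfree.coRefl_apply_self]
  ext Y X
  refine ⟨fun hXY => ?_, fun hYX => ?_⟩
  · rw [ReflectionRel, hli]
    exact AreReflected.symm hXY h.loopfree h.eq_of_ne
  · rw [ReflectionRel, hli] at hYX
    rw [flip, ReflectionRel, ← neg_neg (l i)]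
    exact hYX.symm h.loopfree h.symm.eq_of_ne

theorem leftTotal_reflectionRel (hl' : l' = Q.coRefl K i l) :
    Relator.LeftTotal (ReflectionRel (l := l) (e := e) (l' := l') (e' := e') i) := by
  subst hl'
  intro X
  obtain ⟨Y, hY, hXY⟩ := h.exists_areReflected X.2
  exact ⟨⟨Y, hY⟩, hXY⟩

theorem biTotal_reflectionRel (hl' : l' = Q.coRefl K i l) :
    Relator.BiTotal (ReflectionRel (l := l) (e := e) (l' := l') (e' := e') i) := by
  refine ⟨h.leftTotal_reflectionRel hl', fun Y => ?_⟩
  have hl : l = Q.coRefl K i l' := by rw [hl', h.loopfree.coRefl_coRefl]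
  have hsymm : IsReflectionPair i l' e' e := hl' ▸ h.symm
  obtain ⟨X, hYX⟩ := hsymm.leftTotal_reflectionRel hl Y
  exact ⟨X, (congrFun₂ (h.flip_reflectionRel hl') Y X).mpr hYX⟩

variable [DecidableEq S]

theorem exists_paddedOrbit_reflectionRel (X : PaddedFiber l e) (Y Y' : PaddedFiber l' e')
    (hXY : ReflectionRel i X Y) (hYY' : PaddedOrbit Y Y') :
    ∃ X', PaddedOrbit X X' ∧ ReflectionRel i X' Y' := by
  obtain ⟨g, hg, hY'⟩ := hYY'
  have hcomm (j : Q.I) : Commute (Function.update g i 1 j).1 (e j) := by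
    by_cases hj : j = i
    · subst hj
      rw [Function.update_self]
      exact Commute.one_left _
    · rw [Function.update_of_ne hj, ← h.eq_of_ne hj]
      exact hg j
  refine ⟨⟨_, X.2.gauge hcomm⟩, ⟨_, hcomm, rfl⟩, ?_⟩
  rw [ReflectionRel, hY']
  exact AreReflected.gauge hXY h.loopfree (fun {j} _ => hcomm j)
    fun hj => (Function.update_of_ne hj _ _).symm

theorem paddedRing_le_pullAlong (hl' : l' = Q.coRefl K i l) :
    paddedRing l e ≤ pullAlong (ReflectionRel (l' := l') (e' := e') i) (paddedRing l' e') := by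
  refine inf_relInv_le_pullAlong (h.biTotal_reflectionRel hl').2
    h.exists_paddedOrbit_reflectionRel
    (h.loopfree.paddedRing_le h.ne_zero (h.isIdempotentElem i) ?_ ?_)
  · intro a hh ht r s
    exact mem_pullAlong.mpr ⟨_, hasEntriesIn_adjoin_paddedCoord r s,
      fun X Y hXY => (congrFun₂ (AreReflected.eq_of_ne hXY hh ht) r s).symm⟩
  · intro r s
    refine mem_pullAlong.mpr ⟨_, add_mem (hasEntriesIn_adjoin_throughMap r s)
      (HasEntriesIn.const (l i • neighbourIdempotent i e) r s), fun X Y hXY => ?_⟩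
    exact congrFun₂ (eq_add_of_sub_eq (AreReflected.throughMap_eq hXY).symm) r s

end IsReflectionPair

end Correspondence

theorem IsReflectionPair.nonempty_paddedRing_algEquiv [DecidableEq S]
    (h : IsReflectionPair i l e e') :
    Nonempty (paddedRing l e ≃ₐ[K] paddedRing (Q.coRefl K i l) e') := by
  classical
  refine nonempty_algEquiv_of_le_pullAlong (h.biTotal_reflectionRel rfl)
    (h.paddedRing_le_pullAlong rfl) ?_
  rw [h.flip_reflectionRel rfl]
  exact h.symm.paddedRing_le_pullAlong (h.loopfree.coRefl_coRefl l).symm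

theorem IsPaddedPoint.rank_le {X : Q.PaddedRep K S} (hX : IsPaddedPoint l e X) (hl : l i ≠ 0)
    (he : ∀ j, IsIdempotentElem (e j)) : (e i).rank ≤ ∑ d : Q.Into i, (e (Q.dt d.1)).rank := by
  classical
  have hfactor : e i = (l i)⁻¹ • inMap i X * (neighbourIdempotent i e * outMap i X) := by
    rw [hX.neighbourIdempotent_mul_outMap, Matrix.smul_mul, hX.inMap_mul_outMap,
      inv_smul_smul₀ hl]
  calc (e i).rank ≤ (neighbourIdempotent i e * outMap i X).rank :=
        (congrArg Matrix.rank hfactor).trans_le (Matrix.rank_mul_le_right _ _)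
    _ ≤ (neighbourIdempotent i e).rank := Matrix.rank_mul_le_left _ _
    _ = ∑ d : Q.Into i, (e (Q.dt d.1)).rank :=
        rank_blockDiagonal'_of_isIdempotentElem fun d => he _

end ReflectionIsomorphism

section AdmissibleReflections

variable {Q : FinQuiver} {K : Type} [Field K] {i : Q.I} {l : Q.I → K}

theorem exists_forall_isSplitting {S : Type} [Fintype S] {e : Q.I → Matrix S S K}
    (he : ∀ j, IsIdempotentElem (e j)) {α : Q.I → ℕ} (hα : ∀ j, (e j).rank = α j) :
    ∃ (u : ∀ j, Matrix S (Fin (α j)) K) (w : ∀ j, Matrix (Fin (α j)) S K),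
      ∀ j, IsSplitting (e j) (u j) (w j) := by
  choose u w h using fun j => exists_isSplitting (ι := Fin (α j)) (he j) (by
    rw [Fintype.card_fin, hα])
  exact ⟨u, w, h⟩

theorem Loopfree.isReflectionPair_update (hi : Q.Loopfree i) (hl : l i ≠ 0) {S : Type} [Fintype S]
    {e : Q.I → Matrix S S K} (he : ∀ j, IsIdempotentElem (e j)) {E : Matrix S S K}
    (hE : IsIdempotentElem E)
    (hrank : E.rank + (e i).rank = ∑ d : Q.Into i, (e (Q.dt d.1)).rank) :
    IsReflectionPair i l e (Function.update e i E) where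
  loopfree := hi
  ne_zero := hl
  isIdempotentElem := he
  isIdempotentElem' := by rwa [Function.update_self]
  eq_of_ne hj := Function.update_of_ne hj _ _
  rank_add_rank := by rwa [Function.update_self]

theorem exists_fin_isIdempotentElem_rank_eq (K : Type) [Field K] (α : Q.I → ℕ) (i : Q.I) :
    ∃ (k : ℕ) (e : Q.I → Matrix (Fin k) (Fin k) K), (∀ j, IsIdempotentElem (e j)) ∧
      (∀ j, (e j).rank = α j) ∧ ∑ d : Q.Into i, α (Q.dt d.1) ≤ k := by
  let k := ∑ j, α j + ∑ d : Q.Into i, α (Q.dt d.1)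
  have hα (j : Q.I) : α j ≤ Fintype.card (Fin k) := by
    rw [Fintype.card_fin]
    exact (Finset.single_le_sum_of_canonicallyOrdered (Finset.mem_univ j)).trans
      (Nat.le_add_right _ _)
  choose e he hrank using fun j => exists_isIdempotentElem_rank_eq K (hα j)
  exact ⟨k, e, he, hrank, Nat.le_add_left _ _⟩

theorem toZ_eq_refl {α β : Q.I → ℕ} (hne : ∀ {j}, j ≠ i → β j = α j)
    (hsum : β i + α i = ∑ d : Q.Into i, α (Q.dt d.1)) : Q.toZ β = Q.refl i (Q.toZ α) := by
  funext j
  by_cases hj : j = i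
  · subst hj
    rw [refl_apply_self]
    simp only [toZ]
    exact eq_sub_of_add_eq (mod_cast hsum)
  · rw [refl_apply_of_ne _ hj]
    exact congrArg Nat.cast (hne hj)

theorem Loopfree.exists_invRing_algEquiv (hi : Q.Loopfree i) (hl : l i ≠ 0) {α : Q.I → ℕ}
    (hα : (Q.MomentFiber K l α).Nonempty) :
    ∃ β : Q.I → ℕ, Q.toZ β = Q.refl i (Q.toZ α) ∧
      (Q.MomentFiber K (Q.coRefl K i l) β).Nonempty ∧
      Nonempty (Q.InvRing K l α ≃ₐ[K] Q.InvRing K (Q.coRefl K i l) β) := by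
  classical
  obtain ⟨k, e, he, hrank, hk⟩ := exists_fin_isIdempotentElem_rank_eq K α i
  obtain ⟨u, w, h⟩ := exists_forall_isSplitting he hrank
  obtain ⟨v, hv⟩ := hα
  have hX : IsPaddedPoint l e (pad u w v) := isPaddedPoint_pad h hv
  have hle : (e i).rank ≤ ∑ d : Q.Into i, (e (Q.dt d.1)).rank := hX.rank_le hl he
  obtain ⟨E, hE, hErank⟩ := exists_isIdempotentElem_rank_eq (m := Fin k) K
    (k := ∑ d : Q.Into i, (e (Q.dt d.1)).rank - (e i).rank) <| by
      rw [Fintype.card_fin]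
      exact (Nat.sub_le _ _).trans (by simpa only [hrank] using hk)
  have hpair := hi.isReflectionPair_update hl he hE (hErank ▸ Nat.sub_add_cancel hle)
  obtain ⟨Y, hY, -⟩ := hpair.exists_areReflected hX
  obtain ⟨u', w', h'⟩ := exists_forall_isSplitting hpair.symm.isIdempotentElem fun _ => rfl
  obtain ⟨φ⟩ := nonempty_invRing_algEquiv_paddedRing (l := l) h
  obtain ⟨ψ⟩ := hpair.nonempty_paddedRing_algEquiv
  obtain ⟨χ⟩ := nonempty_invRing_algEquiv_paddedRing (l := Q.coRefl K i l) h'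
  refine ⟨_, toZ_eq_refl (fun hj => ?_) ?_, ⟨_, unpad_mem_momentFiber h' hY⟩,
    ⟨(φ.trans ψ).trans χ.symm⟩⟩
  · rw [hpair.eq_of_ne hj, hrank]
  · simpa only [hrank] using hpair.rank_add_rank

theorem AdmEquiv.exists_invRing_algEquiv {α : Q.I → ℕ} {y : (Q.I → K) × (Q.I → ℤ)}
    (h : Q.AdmEquiv K (l, Q.toZ α) y) (hα : (Q.MomentFiber K l α).Nonempty) :
    ∃ β : Q.I → ℕ, Q.toZ β = y.2 ∧ (Q.MomentFiber K y.1 β).Nonempty ∧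
      Nonempty (Q.InvRing K l α ≃ₐ[K] Q.InvRing K y.1 β) := by
  have : Std.Symm (Q.AdmStep K) := ⟨fun _ _ => AdmStep.symm⟩
  rw [AdmEquiv, Relation.EqvGen.eqvGen_eq_reflTransGen] at h
  induction h with
  | refl => exact ⟨α, rfl, hα, ⟨AlgEquiv.refl⟩⟩
  | tail _ hstep ih =>
    obtain ⟨β, hβ, hne, ⟨φ⟩⟩ := ih
    obtain ⟨i, hi, hl, hz₁, hz₂⟩ := hstep
    obtain ⟨γ, hγ, hne', ⟨ψ⟩⟩ := hi.exists_invRing_algEquiv hl hne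
    rw [← hz₁] at hne' ψ
    exact ⟨γ, by rw [hz₂, ← hβ, hγ], hne', ⟨φ.trans ψ⟩⟩

theorem toZ_injective : Function.Injective Q.toZ := fun _ _ h =>
  funext fun j => Nat.cast_injective (congrFun h j)

theorem nonempty_invRing_algEquiv_of_isEmpty {ν : Q.I → K} {α β : Q.I → ℕ}
    (hα : IsEmpty (Q.MomentFiber K l α)) (hβ : IsEmpty (Q.MomentFiber K ν β)) :
    Nonempty (Q.InvRing K ν β ≃ₐ[K] Q.InvRing K l α) :=
  nonempty_algEquiv_of_le_pullAlong (C := fun _ _ => True) ⟨hβ.elim, hα.elim⟩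
    (fun _ _ => mem_pullAlong.mpr ⟨0, zero_mem _, hβ.elim⟩)
    (fun _ _ => mem_pullAlong.mpr ⟨0, zero_mem _, hα.elim⟩)

end AdmissibleReflections

end FinQuiver

theorem stmt8_general (Q : FinQuiver) (K : Type) [Field K] (l ν : Q.I → K) (α β : Q.I → ℕ)
    (h : Q.AdmEquiv K (l, Q.toZ α) (ν, Q.toZ β)) :
    Nonempty (Q.InvRing K ν β ≃ₐ[K] Q.InvRing K l α) := by
  have hsymm : Q.AdmEquiv K (ν, Q.toZ β) (l, Q.toZ α) := .symm _ _ h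
  by_cases hβ : (Q.MomentFiber K ν β).Nonempty
  · obtain ⟨α', hα', -, hiso⟩ := hsymm.exists_invRing_algEquiv hβ
    exact FinQuiver.toZ_injective hα' ▸ hiso
  have hα : ¬(Q.MomentFiber K l α).Nonempty := fun hα => by
    obtain ⟨β', hβ', hne, -⟩ := h.exists_invRing_algEquiv hα
    exact hβ (FinQuiver.toZ_injective hβ' ▸ hne)
  exact FinQuiver.nonempty_invRing_algEquiv_of_isEmpty
    (Set.isEmpty_coe_sort.mpr (Set.not_nonempty_iff_eq_empty.mp hα))
    (Set.isEmpty_coe_sort.mpr (Set.not_nonempty_iff_eq_empty.mp hβ))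

/-- if `(ν,β)` is obtained from `(λ,α)` by a sequence of admissible
reflections, then `N(ν,β) ≅ N(λ,α)` as varieties (isomorphic coordinate rings). -/
theorem stmt8 (Q : FinQuiver) (K : Type) [Field K] [CharZero K] [IsAlgClosed K]
    (l ν : Q.I → K) (α β : Q.I → ℕ)
    (h : Q.AdmEquiv K (l, Q.toZ α) (ν, Q.toZ β)) :
    Nonempty (Q.InvRing K ν β ≃ₐ[K] Q.InvRing K l α) := by
  exact stmt8_general Q K l ν α β h

end
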